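/- Let n ≥ 1 be an integer, θ ∈ (0, π/2), 1 ≤ k ≤ n, and let φ : C_θ → (0,∞) be smooth. There exists a constant C > 0 (depending only on n, k, θ and φ) such that: every smooth capillary function s on C_θ with τ[s] > 0 satisfying σ_k(τ[s])(ζ) = φ(ζ) for all ζ ∈ C_θ obeys σ_1(τ[s])(ζ) ≤ C for all ζ ∈ C_θ; equivalently, the trace of the Hessian D²G(u) of the 1-homogeneous extension G of s satisfies trace(D²G(u)) ≤ C for every u ∈ S^n_θ. -/

import Mathlib

open MeasureTheory Real Set
open scoped RealInnerProductSpace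

noncomputable section

abbrev V (n : ℕ) := EuclideanSpace ℝ (Fin (n + 1))

/-- The vertical unit vector `E_{n+1}`. -/
def Etop (n : ℕ) : V n := EuclideanSpace.single (Fin.last n) 1

/-- The spherical cap `S^n_θ`. -/
def sphCap (n : ℕ) (θ : ℝ) : Set (V n) :=
  {u | ‖u‖ = 1 ∧ Real.cos θ ≤ u (Fin.last n)}

/-- The boundary circle `∂S^n_θ`. -/
def sphCapBdry (n : ℕ) (θ : ℝ) : Set (V n) :=
  {u | ‖u‖ = 1 ∧ u (Fin.last n) = Real.cos θ}

/-- The capillary cap `C_θ`. -/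
def capCap (n : ℕ) (θ : ℝ) : Set (V n) :=
  {ζ | 0 ≤ ζ (Fin.last n) ∧ ‖ζ + Real.cos θ • Etop n‖ = 1}

/-- The open cone over `S^n_θ`. -/
def coneCap (n : ℕ) (θ : ℝ) : Set (V n) :=
  {x | ∃ l : ℝ, 0 < l ∧ ∃ u ∈ sphCap n θ, x = l • u}

/-- `G` is a positively 1-homogeneous extension of `g : C_θ → ℝ` which is `C^m` on an
open neighborhood of the cone over `S^n_θ`. -/
def IsHomExt (n : ℕ) (θ : ℝ) (m : ℕ∞) (g G : V n → ℝ) : Prop :=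
  (∃ U : Set (V n), IsOpen U ∧ coneCap n θ ⊆ U ∧ ContDiffOn ℝ m G U) ∧
  (∀ l : ℝ, 0 < l → ∀ u ∈ sphCap n θ, G (l • u) = l * G u) ∧
  (∀ ζ ∈ capCap n θ, G (ζ + Real.cos θ • Etop n) = g ζ)

/-- The Hessian of `G` at `u` as a quadratic/bilinear form. -/
def hessQ (n : ℕ) (G : V n → ℝ) (u v w : V n) : ℝ :=
  fderiv ℝ (fderiv ℝ G) u v w

/-- The Hessian matrix `D²G(u)` in the standard coordinates. -/
def hessM (n : ℕ) (G : V n → ℝ) (u : V n) : Matrix (Fin (n + 1)) (Fin (n + 1)) ℝ :=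
  fun i j => fderiv ℝ (fderiv ℝ G) u (EuclideanSpace.single i 1) (EuclideanSpace.single j 1)

/-- `σ_j` of the eigenvalues of `D²G(u)` (via characteristic polynomial coefficients). -/
def sigmaElem (n : ℕ) (j : ℕ) (G : V n → ℝ) (u : V n) : ℝ :=
  (-1 : ℝ) ^ j * ((hessM n G u).charpoly.coeff (n + 1 - j))

/-- `τ[g] ≥ 0` : the Hessian of the extension is positive semidefinite on `S^n_θ`. -/
def TauNonneg (n : ℕ) (θ : ℝ) (G : V n → ℝ) : Prop :=
  ∀ u ∈ sphCap n θ, ∀ v : V n, 0 ≤ hessQ n G u v v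

/-- `τ[g] > 0`. -/
def TauPos (n : ℕ) (θ : ℝ) (G : V n → ℝ) : Prop :=
  TauNonneg n θ G ∧
  ∀ u ∈ sphCap n θ, ∀ v : V n, v ≠ 0 → ⟪v, u⟫ = 0 → 0 < hessQ n G u v v

/-- Capillary (Robin) boundary condition: `∂_{n+1}G = 0` on `∂S^n_θ`. -/
def IsCapillaryF (n : ℕ) (θ : ℝ) (G : V n → ℝ) : Prop :=
  ∀ u ∈ sphCapBdry n θ, fderiv ℝ G u (Etop n) = 0

/-- Reflection negating the horizontal coordinates. -/
def horizNeg (n : ℕ) (ζ : V n) : V n := (2 * ζ (Fin.last n)) • Etop n - ζ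

/-- Support function of a set. -/
def suppFn (n : ℕ) (K : Set (V n)) (u : V n) : ℝ := sSup ((fun y => ⟪u, y⟫) '' K)

/-- Relative interior (within the hyperplane `{x_{n+1}=0}`) of the base `K ∩ {x_{n+1}=0}`. -/
def relintBase (n : ℕ) (K : Set (V n)) : Set (V n) :=
  {x | x (Fin.last n) = 0 ∧ ∃ ε > 0, ∀ y : V n, y (Fin.last n) = 0 → ‖y - x‖ < ε → y ∈ K}

/-- A `θ`-capillary convex body. -/
def IsCapBody (n : ℕ) (θ : ℝ) (K : Set (V n)) : Prop :=
  IsCompact K ∧ Convex ℝ K ∧ (interior K).Nonempty ∧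
  (∀ x ∈ K, 0 ≤ x (Fin.last n)) ∧
  (∀ x ∈ K, 0 < x (Fin.last n) → ∀ u : V n, ‖u‖ = 1 → ⟪u, x⟫ = suppFn n K u →
    Real.cos θ ≤ u (Fin.last n)) ∧
  (∀ v : V n, ‖v‖ = 1 → v (Fin.last n) = 0 →
    suppFn n K (Real.sin θ • v + Real.cos θ • Etop n) = Real.sin θ * suppFn n K v) ∧
  (relintBase n K).Nonempty

/-- `ψ` is one of `x²`, `x^p (p<0)`, `-log x`. -/
def PsiOK (ψ : ℝ → ℝ) : Prop :=
  (ψ = fun x : ℝ => x ^ 2) ∨ (∃ p : ℝ, p < 0 ∧ ψ = fun x : ℝ => x ^ p) ∨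
    (ψ = fun x : ℝ => -Real.log x)

/-
Maximize `σ₁ + B x_{n+1}` over the cap, with `B` large depending only on the data. All derivatives
are taken along arcs of the cap through the maximum point, in an orthonormal frame diagonalizing
`D²G` there. Write `λ_i` for the principal radii and `w_i` for the derivatives of `log σ_k` in
`λ_i`.

At an interior maximum, the second derivative of `σ₁ + B x_{n+1}` along great circles bounds the
sums `∑_i ∇²_{aa} (D²G)_{ii}`, and the concavity of `log σ_k`, applied at nearby points of the cap,
bounds `∑_i w_i ∇²_{aa} (D²G)_{ii}` from below. Commuting the derivatives costs `λ_i - λ_a`, so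
contracting both with the weights gives `(∑ w)(∑ λ) ≤ B ∑ w + C`, and `∑ w` is bounded below.

At a boundary maximum the conormal `μ` is principal, because of the capillary condition, and
`∂_μ (D²G)_{ii} = cot θ (λ_μ - λ_i)` for `i ≠ μ`. Comparing the conormal derivatives of the two
functions yields `cot θ ∑ (w_i - w_μ)(λ_μ - λ_i) + w_μ B sin θ ≤ C`. Both terms are nonnegative, and
boundedness of the first keeps `w_μ` away from zero, so the second fails once `B` is large.
-/

open Filter Topology
open scoped ContDiff

section ElementarySymmetric

variable {ι R : Type*}

/-- The elementary symmetric polynomial of degree `k` in the entries of `x` indexed by `S`.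
It agrees with `Multiset.esymm` (see `Finset.esymm_map_val`); keeping the index set explicit
lets us delete a variable by `Finset.erase`. -/
def esym [CommSemiring R] (k : ℕ) (S : Finset ι) (x : ι → R) : R :=
  ∑ T ∈ S.powersetCard k, ∏ i ∈ T, x i

section CommSemiring

variable [CommSemiring R]

@[simp]
lemma esym_zero (S : Finset ι) (x : ι → R) : esym 0 S x = 1 := by
  simp [esym]

lemma esym_one (S : Finset ι) (x : ι → R) : esym 1 S x = ∑ i ∈ S, x i := by
  simp [esym, Finset.powersetCard_one]

lemma esym_smul (t : R) (k : ℕ) (S : Finset ι) (x : ι → R) :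
    esym k S (t • x) = t ^ k * esym k S x := by
  simp_rw [esym, Finset.mul_sum]
  refine Finset.sum_congr rfl fun T hT => ?_
  simp [Finset.prod_mul_distrib, (Finset.mem_powersetCard.1 hT).2]

lemma esym_const (t : R) (k : ℕ) (S : Finset ι) :
    esym k S (fun _ => t) = S.card.choose k * t ^ k := by
  rw [esym, Finset.sum_congr rfl fun T hT => by
    rw [Finset.prod_const, (Finset.mem_powersetCard.1 hT).2]]
  simp

variable [DecidableEq ι]

lemma sum_powersetCard_succ_sum_erase {M : Type*} [AddCommMonoid M] (k : ℕ) (S : Finset ι)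
    (f : ι → Finset ι → M) :
    ∑ T ∈ S.powersetCard (k + 1), ∑ i ∈ T, f i (T.erase i) =
      ∑ i ∈ S, ∑ T ∈ (S.erase i).powersetCard k, f i T := by
  rw [Finset.sum_sigma', Finset.sum_sigma']
  refine Finset.sum_bij' (fun p _ => ⟨p.2, p.1.erase p.2⟩) (fun p _ => ⟨insert p.1 p.2, p.1⟩)
    ?_ ?_ ?_ ?_ ?_ <;> rintro ⟨_, _⟩ h <;> rw [Finset.mem_sigma] at h <;>
    grind (ematch := 8) [Finset.insert_erase, Finset.erase_insert]

lemma esym_succ_eq_mul_esym_erase_add (k : ℕ) {S : Finset ι} {a : ι} (ha : a ∈ S) (x : ι → R) :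
    esym (k + 1) S x = x a * esym k (S.erase a) x + esym (k + 1) (S.erase a) x := by
  have haT : ∀ T ∈ (S.erase a).powersetCard k, a ∉ T := by grind
  have hinj : Set.InjOn (insert a) ((S.erase a).powersetCard k : Set (Finset ι)) :=
    fun T hT T' hT' h => by
      rw [← Finset.erase_insert (haT T hT), h, Finset.erase_insert (haT T' hT')]
  rw [esym, ← Finset.insert_erase ha, Finset.powersetCard_succ_insert (Finset.notMem_erase a S),
    Finset.sum_union (Finset.disjoint_left.2 (by grind)), Finset.sum_image hinj, add_comm,
    Finset.erase_insert (Finset.notMem_erase a S), esym, esym, Finset.mul_sum]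
  exact congrArg (· + _) (Finset.sum_congr rfl fun T hT => Finset.prod_insert (haT T hT))

lemma sum_mul_esym_erase (k : ℕ) (S : Finset ι) (x : ι → R) :
    ∑ i ∈ S, x i * esym k (S.erase i) x = (k + 1) * esym (k + 1) S x := by
  simp_rw [esym, Finset.mul_sum]
  rw [← sum_powersetCard_succ_sum_erase k S fun i T => x i * ∏ j ∈ T, x j]
  refine Finset.sum_congr rfl fun T hT => ?_
  rw [Finset.sum_congr rfl fun i hi => Finset.mul_prod_erase T x hi, Finset.sum_const,
    (Finset.mem_powersetCard.1 hT).2]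
  simp

lemma pow_prod_eq_prod_prod_erase {k : ℕ} {T : Finset ι} (hT : T.card = k + 1) (x : ι → R) :
    (∏ i ∈ T, x i) ^ k = ∏ i ∈ T, ∏ j ∈ T.erase i, x j := by
  rw [Finset.prod_comm' (t' := T) (s' := T.erase) (by grind), ← Finset.prod_pow]
  refine Finset.prod_congr rfl fun i hi => ?_
  rw [Finset.prod_const, Finset.card_erase_of_mem hi, hT, Nat.add_sub_cancel]

end CommSemiring

lemma esym_nonneg {k : ℕ} {S : Finset ι} {x : ι → ℝ} (hx : ∀ i ∈ S, 0 ≤ x i) :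
    0 ≤ esym k S x :=
  Finset.sum_nonneg fun _ hT => Finset.prod_nonneg fun i hi =>
    hx i ((Finset.mem_powersetCard.1 hT).1 hi)

lemma esym_pos {k : ℕ} {S : Finset ι} (hk : k ≤ S.card) {x : ι → ℝ} (hx : ∀ i ∈ S, 0 < x i) :
    0 < esym k S x :=
  Finset.sum_pos (fun _ hT => Finset.prod_pos fun i hi =>
    hx i ((Finset.mem_powersetCard.1 hT).1 hi)) (Finset.powersetCard_nonempty.2 hk)

lemma prod_le_esym_card {k : ℕ} {S T : Finset ι} {x : ι → ℝ} (hx : ∀ i ∈ S, 0 ≤ x i)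
    (hT : T ∈ S.powersetCard k) : ∏ i ∈ T, x i ≤ esym k S x :=
  Finset.single_le_sum (f := fun U : Finset ι => ∏ j ∈ U, x j)
    (fun _ hU => Finset.prod_nonneg fun j hj => hx j ((Finset.mem_powersetCard.1 hU).1 hj)) hT

lemma esym_succ_le_of_esym_le_pow {k : ℕ} (hk : k ≠ 0) {S : Finset ι} {x : ι → ℝ}
    (hx : ∀ i ∈ S, 0 ≤ x i) {r : ℝ} (hr : 0 ≤ r) (h : esym k S x ≤ r ^ k) :
    esym (k + 1) S x ≤ S.card.choose (k + 1) * r ^ (k + 1) := by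
  classical
  have hmonomial : ∀ T ∈ S.powersetCard (k + 1), ∏ i ∈ T, x i ≤ r ^ (k + 1) := by
    intro T hT
    obtain ⟨hTS, hTcard⟩ := Finset.mem_powersetCard.1 hT
    refine le_of_pow_le_pow_left₀ hk (by positivity) ?_
    calc (∏ i ∈ T, x i) ^ k = ∏ i ∈ T, ∏ j ∈ T.erase i, x j := pow_prod_eq_prod_prod_erase hTcard x
      _ ≤ ∏ _i ∈ T, r ^ k := Finset.prod_le_prod
          (fun i _ => Finset.prod_nonneg fun j hj => hx j (hTS (Finset.mem_of_mem_erase hj)))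
          fun i hi => (prod_le_esym_card hx <| Finset.mem_powersetCard.2
            ⟨(Finset.erase_subset i T).trans hTS,
              by rw [Finset.card_erase_of_mem hi, hTcard, Nat.add_sub_cancel]⟩).trans h
      _ = (r ^ (k + 1)) ^ k := by rw [Finset.prod_const, hTcard, ← pow_mul, ← pow_mul, mul_comm]
  calc esym (k + 1) S x ≤ ∑ _T ∈ S.powersetCard (k + 1), r ^ (k + 1) := Finset.sum_le_sum hmonomial
    _ = S.card.choose (k + 1) * r ^ (k + 1) := by simp

variable [DecidableEq ι]

lemma sub_mul_esym_erase_sub_nonneg (k : ℕ) {S : Finset ι} {x : ι → ℝ} (hx : ∀ i ∈ S, 0 ≤ x i)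
    {a b : ι} (ha : a ∈ S) (hb : b ∈ S) :
    0 ≤ (x a - x b) * (esym k (S.erase b) x - esym k (S.erase a) x) := by
  obtain rfl | hab := eq_or_ne a b
  · simp
  cases k with
  | zero => simp
  | succ k =>
    rw [esym_succ_eq_mul_esym_erase_add k (Finset.mem_erase.2 ⟨hab, ha⟩),
      esym_succ_eq_mul_esym_erase_add k (Finset.mem_erase.2 ⟨hab.symm, hb⟩),
      Finset.erase_right_comm]
    have h : 0 ≤ esym k ((S.erase a).erase b) x :=
      esym_nonneg fun i hi => hx i (Finset.mem_of_mem_erase (Finset.mem_of_mem_erase hi))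
    linear_combination mul_nonneg (sq_nonneg (x a - x b)) h

lemma hasDerivAt_esym (k : ℕ) {S : Finset ι} {x : ℝ → ι → ℝ} {x' : ι → ℝ} {t : ℝ}
    (hx : ∀ i ∈ S, HasDerivAt (fun τ => x τ i) (x' i) t) :
    HasDerivAt (fun τ => esym (k + 1) S (x τ)) (∑ i ∈ S, esym k (S.erase i) (x t) * x' i) t := by
  have hterm : ∀ T ∈ S.powersetCard (k + 1), HasDerivAt (fun τ => ∏ i ∈ T, x τ i)
      (∑ i ∈ T, (∏ j ∈ T.erase i, x t j) * x' i) t := fun T hT =>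
    HasDerivAt.fun_finsetProd fun i hi => hx i ((Finset.mem_powersetCard.1 hT).1 hi)
  refine (HasDerivAt.fun_sum hterm).congr_deriv ?_
  rw [sum_powersetCard_succ_sum_erase k S fun i T => (∏ j ∈ T, x t j) * x' i]
  simp_rw [← Finset.sum_mul, esym]

end ElementarySymmetric

section LogConcavity

variable {ι : Type*} {k : ℕ} {S : Finset ι} {x y : ι → ℝ}

/-- The quotient `σ_{k+1} / σ_k`, which is positively homogeneous of degree one and concave on
the positive cone. -/
def esymQuot (k : ℕ) (S : Finset ι) (x : ι → ℝ) : ℝ :=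
  esym (k + 1) S x / esym k S x

lemma esymQuot_smul {t : ℝ} (ht : t ≠ 0) (k : ℕ) (S : Finset ι) (x : ι → ℝ) :
    esymQuot k S (t • x) = t * esymQuot k S x := by
  rw [esymQuot, esymQuot, esym_smul, esym_smul, pow_succ]
  field_simp

lemma esymQuot_nonneg (hx : ∀ i ∈ S, 0 ≤ x i) : 0 ≤ esymQuot k S x :=
  div_nonneg (esym_nonneg hx) (esym_nonneg hx)

lemma esymQuot_pos (hk : k < S.card) (hx : ∀ i ∈ S, 0 < x i) : 0 < esymQuot k S x :=
  div_pos (esym_pos hk hx) (esym_pos hk.le hx)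

lemma log_esym_eq_sum_log_esymQuot (hk : k ≤ S.card) (hx : ∀ i ∈ S, 0 < x i) :
    Real.log (esym k S x) = ∑ j ∈ Finset.range k, Real.log (esymQuot j S x) := by
  induction k with
  | zero => simp
  | succ k ih =>
    rw [Finset.sum_range_succ, ← ih (by omega), esymQuot,
      Real.log_div (esym_pos hk hx).ne' (esym_pos (by omega) hx).ne']
    ring

lemma mul_div_add_superadditive {a b c d q : ℝ} (ha : 0 < a) (hb : 0 ≤ b) (hc : 0 < c)
    (hd : 0 ≤ d) (hq : b + d ≤ q) :
    a * (b / (a + b)) + c * (d / (c + d)) ≤ (a + c) * (q / (a + c + q)) := by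
  calc a * (b / (a + b)) + c * (d / (c + d))
      ≤ (a + c) * ((b + d) / (a + c + (b + d))) := by
        rw [← mul_div_assoc, ← mul_div_assoc, ← mul_div_assoc,
          div_add_div _ _ (by positivity) (by positivity),
          div_le_div_iff₀ (by positivity) (by positivity)]
        nlinarith [sq_nonneg (a * d - b * c)]
    _ ≤ (a + c) * (q / (a + c + q)) := by
        gcongr ?_ * ?_
        rw [div_le_div_iff₀ (by positivity) (by linarith)]
        nlinarith

lemma esymQuot_succ_eq_sum [DecidableEq ι] (hk : k + 1 ≤ S.card) (hx : ∀ i ∈ S, 0 < x i) :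
    ((k : ℝ) + 2) * esymQuot (k + 1) S x =
      ∑ i ∈ S, x i * (esymQuot k (S.erase i) x / (x i + esymQuot k (S.erase i) x)) := by
  have hquot : ∀ i ∈ S, esymQuot k (S.erase i) x / (x i + esymQuot k (S.erase i) x) =
      esym (k + 1) (S.erase i) x / esym (k + 1) S x := by
    intro i hi
    have hx' : ∀ j ∈ S.erase i, 0 < x j := fun j hj => hx j (Finset.mem_of_mem_erase hj)
    have hpos : 0 < esym k (S.erase i) x :=
      esym_pos (by rw [Finset.card_erase_of_mem hi]; omega) hx'
    have hnonneg : 0 ≤ esym (k + 1) (S.erase i) x := esym_nonneg fun j hj => (hx' j hj).le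
    have hxi := hx i hi
    rw [esym_succ_eq_mul_esym_erase_add k hi, esymQuot]
    field_simp
  rw [Finset.sum_congr rfl fun i hi => by rw [hquot i hi, ← mul_div_assoc], ← Finset.sum_div,
    sum_mul_esym_erase, esymQuot]
  push_cast
  ring

/-- The Marcus–Lopes inequality. -/
lemma esymQuot_add_le (hk : k ≤ S.card) (hx : ∀ i ∈ S, 0 < x i) (hy : ∀ i ∈ S, 0 < y i) :
    esymQuot k S x + esymQuot k S y ≤ esymQuot k S (x + y) := by
  classical
  induction k generalizing S with
  | zero => simp [esymQuot, esym_one, Finset.sum_add_distrib]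
  | succ k ih =>
    have hxy : ∀ i ∈ S, 0 < (x + y) i := fun i hi => add_pos (hx i hi) (hy i hi)
    refine le_of_mul_le_mul_left ?_ (by positivity : (0 : ℝ) < k + 2)
    rw [mul_add, esymQuot_succ_eq_sum hk hx, esymQuot_succ_eq_sum hk hy,
      esymQuot_succ_eq_sum hk hxy, ← Finset.sum_add_distrib]
    refine Finset.sum_le_sum fun i hi => ?_
    have hx' : ∀ j ∈ S.erase i, 0 < x j := fun j hj => hx j (Finset.mem_of_mem_erase hj)
    have hy' : ∀ j ∈ S.erase i, 0 < y j := fun j hj => hy j (Finset.mem_of_mem_erase hj)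
    exact mul_div_add_superadditive (hx i hi) (esymQuot_nonneg fun j hj => (hx' j hj).le) (hy i hi)
      (esymQuot_nonneg fun j hj => (hy' j hj).le)
      (ih (by rw [Finset.card_erase_of_mem hi]; omega) hx' hy')

variable [DecidableEq ι]

/-- The partial derivative `∂ log σ_{k+1} / ∂x_i`. -/
def esymLogDeriv (k : ℕ) (S : Finset ι) (x : ι → ℝ) (i : ι) : ℝ :=
  esym k (S.erase i) x / esym (k + 1) S x

lemma esymLogDeriv_nonneg (hx : ∀ i ∈ S, 0 ≤ x i) (i : ι) : 0 ≤ esymLogDeriv k S x i :=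
  div_nonneg (esym_nonneg fun j hj => hx j (Finset.mem_of_mem_erase hj)) (esym_nonneg hx)

lemma sum_esymLogDeriv_mul_self (hk : k + 1 ≤ S.card) (hx : ∀ i ∈ S, 0 < x i) :
    ∑ i ∈ S, esymLogDeriv k S x i * x i = k + 1 := by
  have hpos := esym_pos hk hx
  calc ∑ i ∈ S, esymLogDeriv k S x i * x i
      = (∑ i ∈ S, x i * esym k (S.erase i) x) / esym (k + 1) S x := by
        rw [Finset.sum_div]
        exact Finset.sum_congr rfl fun i _ => by rw [esymLogDeriv]; ring
    _ = k + 1 := by rw [sum_mul_esym_erase]; field_simp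

lemma sub_mul_esymLogDeriv_sub_nonneg (hx : ∀ i ∈ S, 0 ≤ x i) {a b : ι} (ha : a ∈ S)
    (hb : b ∈ S) : 0 ≤ (x a - x b) * (esymLogDeriv k S x b - esymLogDeriv k S x a) := by
  rw [esymLogDeriv, esymLogDeriv, ← sub_div, ← mul_div_assoc]
  exact div_nonneg (sub_mul_esym_erase_sub_nonneg k hx ha hb) (esym_nonneg hx)

lemma hasDerivAt_log_esym_line (hk : k + 1 ≤ S.card) (hx : ∀ i ∈ S, 0 < x i) (y : ι → ℝ) :
    HasDerivAt (fun t : ℝ => Real.log (esym (k + 1) S (x + t • y)))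
      (∑ i ∈ S, esymLogDeriv k S x i * y i) 0 := by
  have hline : ∀ i ∈ S, HasDerivAt (fun t : ℝ => (x + t • y) i) (y i) 0 := fun i _ => by
    simpa using ((hasDerivAt_id (0 : ℝ)).mul_const (y i)).const_add (x i)
  refine ((hasDerivAt_esym k hline).log (by simpa using (esym_pos hk hx).ne')).congr_deriv ?_
  simp only [zero_smul, add_zero, Finset.sum_div, esymLogDeriv, div_mul_eq_mul_div]

lemma deriv_le_of_eventually_le_right {f g : ℝ → ℝ} {f' g' a : ℝ} (hf : HasDerivAt f f' a)
    (hg : HasDerivAt g g' a) (ha : f a = g a) (hle : ∀ᶠ t in 𝓝[>] a, f t ≤ g t) : f' ≤ g' := by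
  have hslope {h : ℝ → ℝ} {h' : ℝ} (hh : HasDerivAt h h' a) :
      Tendsto (slope h a) (𝓝[>] a) (𝓝 h') :=
    (hasDerivAt_iff_tendsto_slope.1 hh).mono_left (nhdsWithin_mono a fun _ ht => ne_of_gt ht)
  refine le_of_tendsto_of_tendsto (hslope hf) (hslope hg) ?_
  filter_upwards [hle, self_mem_nhdsWithin] with t ht hta
  rw [slope_def_field, slope_def_field, ha]
  exact div_le_div_of_nonneg_right (by linarith) (sub_nonneg.2 (le_of_lt hta))

/-- Both sides are derivatives at `t = 0`: the right one of `log σ_{k+1} (x + t y)`, the left one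
of its minorant `∑ log (q_j x + t q_j y)`, where `q_j = σ_{j+1} / σ_j`. -/
lemma sum_esymQuot_div_le (hk : k + 1 ≤ S.card) (hx : ∀ i ∈ S, 0 < x i)
    (hy : ∀ i ∈ S, 0 < y i) :
    ∑ j ∈ Finset.range (k + 1), esymQuot j S y / esymQuot j S x ≤
      ∑ i ∈ S, esymLogDeriv k S x i * y i := by
  have hqx : ∀ j ∈ Finset.range (k + 1), 0 < esymQuot j S x := fun j hj =>
    esymQuot_pos ((Finset.mem_range.1 hj).trans_le hk) hx
  have hqy : ∀ j ∈ Finset.range (k + 1), 0 < esymQuot j S y := fun j hj =>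
    esymQuot_pos ((Finset.mem_range.1 hj).trans_le hk) hy
  have hderiv : HasDerivAt (fun t : ℝ => ∑ j ∈ Finset.range (k + 1),
      Real.log (esymQuot j S x + t * esymQuot j S y))
      (∑ j ∈ Finset.range (k + 1), esymQuot j S y / esymQuot j S x) 0 := by
    refine HasDerivAt.fun_sum fun j hj => ?_
    have hline : HasDerivAt (fun t : ℝ => esymQuot j S x + t * esymQuot j S y)
        (esymQuot j S y) 0 := by
      simpa using ((hasDerivAt_id (0 : ℝ)).mul_const (esymQuot j S y)).const_add (esymQuot j S x)
    simpa using hline.log (by simpa using (hqx j hj).ne')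
  refine deriv_le_of_eventually_le_right hderiv (hasDerivAt_log_esym_line hk hx y)
    (by simp [log_esym_eq_sum_log_esymQuot hk hx]) ?_
  filter_upwards [self_mem_nhdsWithin] with t (ht : 0 < t)
  have hty : ∀ i ∈ S, 0 < (t • y) i := fun i hi => mul_pos ht (hy i hi)
  rw [log_esym_eq_sum_log_esymQuot (x := x + t • y) hk fun i hi => add_pos (hx i hi) (hty i hi)]
  refine Finset.sum_le_sum fun j hj => Real.log_le_log
    (add_pos (hqx j hj) (mul_pos ht (hqy j hj))) ?_
  rw [← esymQuot_smul ht.ne']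
  exact esymQuot_add_le ((Finset.mem_range.1 hj).le.trans hk) hx hty

/-- This is concavity of `log σ_{k+1}`: by Euler's relation, `k + 1 = ∑ x_i ∂_i log σ_{k+1}`. -/
lemma log_esym_sub_log_esym_le (hk : k + 1 ≤ S.card) (hx : ∀ i ∈ S, 0 < x i)
    (hy : ∀ i ∈ S, 0 < y i) :
    Real.log (esym (k + 1) S y) - Real.log (esym (k + 1) S x) + (k + 1) ≤
      ∑ i ∈ S, esymLogDeriv k S x i * y i := by
  refine le_trans ?_ (sum_esymQuot_div_le hk hx hy)
  rw [log_esym_eq_sum_log_esymQuot hk hx, log_esym_eq_sum_log_esymQuot hk hy,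
    ← Finset.sum_sub_distrib]
  have hlog : ∀ j ∈ Finset.range (k + 1), Real.log (esymQuot j S y) - Real.log (esymQuot j S x) + 1
      ≤ esymQuot j S y / esymQuot j S x := by
    intro j hj
    have hqx := esymQuot_pos ((Finset.mem_range.1 hj).trans_le hk) hx
    have hqy := esymQuot_pos ((Finset.mem_range.1 hj).trans_le hk) hy
    rw [← Real.log_div hqy.ne' hqx.ne']
    linarith [Real.log_le_sub_one_of_pos (div_pos hqy hqx)]
  simpa [Finset.sum_add_distrib] using Finset.sum_le_sum hlog

lemma div_le_sum_esymLogDeriv (hk : k + 1 ≤ S.card) (hx : ∀ i ∈ S, 0 < x i) {K : ℝ} (hK : 1 ≤ K)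
    (hxK : esym (k + 1) S x ≤ K) : (k + 1) / K ≤ ∑ i ∈ S, esymLogDeriv k S x i := by
  have hK0 : 0 < K := by linarith
  have hle : esym (k + 1) S x ≤ esym (k + 1) S fun _ => K :=
    calc esym (k + 1) S x ≤ K := hxK
      _ ≤ K ^ (k + 1) := le_self_pow₀ hK (by omega)
      _ ≤ S.card.choose (k + 1) * K ^ (k + 1) :=
        le_mul_of_one_le_left (by positivity) (by exact_mod_cast Nat.choose_pos hk)
      _ = esym (k + 1) S fun _ => K := (esym_const K (k + 1) S).symm
  have htangent := log_esym_sub_log_esym_le hk hx (y := fun _ => K) fun _ _ => hK0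
  rw [div_le_iff₀ hK0, Finset.sum_mul]
  linarith [Real.log_le_log (esym_pos hk hx) hle]

end LogConcavity

lemma sum_sub_mul_sub_eq {ι R : Type*} [CommRing R] (S : Finset ι) (p x : ι → R) (m : ι) :
    ∑ i ∈ S, (p i - p m) * (x m - x i) =
      x m * ∑ i ∈ S, p i - ∑ i ∈ S, p i * x i - S.card * (x m * p m) + p m * ∑ i ∈ S, x i := by
  simp only [sub_mul, mul_sub, Finset.sum_sub_distrib, ← Finset.sum_mul, ← Finset.mul_sum,
    Finset.sum_const, nsmul_eq_mul]
  ring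

lemma sum_mul_sum_eq_of_commutator {ι R : Type*} [CommRing R] {S : Finset ι} {x : ι → R}
    {M : ι → ι → R} (hM : ∀ a ∈ S, ∀ i ∈ S, M a i - M i a = x i - x a) (p : ι → R) :
    (∑ i ∈ S, x i) * ∑ i ∈ S, p i =
      ∑ a ∈ S, p a * ∑ i ∈ S, M a i - ∑ a ∈ S, ∑ i ∈ S, p i * M a i +
        S.card * ∑ i ∈ S, p i * x i := by
  have hswap : ∑ a ∈ S, p a * ∑ i ∈ S, M a i - ∑ a ∈ S, ∑ i ∈ S, p i * M a i =
      ∑ a ∈ S, ∑ i ∈ S, p i * (x a - x i) := by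
    simp_rw [Finset.mul_sum]
    rw [Finset.sum_comm (f := fun a i => p a * M a i), ← Finset.sum_sub_distrib]
    refine Finset.sum_congr rfl fun a ha => ?_
    rw [← Finset.sum_sub_distrib]
    exact Finset.sum_congr rfl fun i hi => by rw [← mul_sub, hM i hi a ha]
  rw [hswap]
  simp only [mul_sub, Finset.sum_sub_distrib, ← Finset.sum_mul, ← Finset.mul_sum,
    Finset.sum_const, nsmul_eq_mul]
  ring

lemma sum_sub_mul_sum_le_of_commutator {ι : Type*} {S : Finset ι} {x p : ι → ℝ} {M : ι → ι → ℝ}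
    {B K : ℝ} (hM : ∀ a ∈ S, ∀ i ∈ S, M a i - M i a = x i - x a) (hp : ∀ a ∈ S, 0 ≤ p a)
    (hcol : ∀ a ∈ S, ∑ i ∈ S, M a i + 2 * x a ≤ B)
    (hrow : ∀ a ∈ S, -K - 2 * (p a * x a) ≤ ∑ i ∈ S, p i * M a i) :
    (∑ i ∈ S, x i - B) * ∑ i ∈ S, p i ≤ S.card * (K + ∑ i ∈ S, p i * x i) := by
  have hcol' : ∑ a ∈ S, p a * ∑ i ∈ S, M a i ≤ B * ∑ a ∈ S, p a - 2 * ∑ a ∈ S, p a * x a := by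
    rw [Finset.mul_sum, Finset.mul_sum, ← Finset.sum_sub_distrib]
    exact Finset.sum_le_sum fun a ha => by nlinarith [hcol a ha, hp a ha]
  have hrow' : -(S.card * K) - 2 * ∑ a ∈ S, p a * x a ≤ ∑ a ∈ S, ∑ i ∈ S, p i * M a i := by
    refine le_of_eq_of_le ?_ (Finset.sum_le_sum hrow)
    rw [Finset.sum_sub_distrib, Finset.mul_sum, Finset.sum_const, nsmul_eq_mul, mul_neg]
  linarith [sum_mul_sum_eq_of_commutator hM p]

section LowerBound

variable {ι : Type*} [DecidableEq ι] {k : ℕ} {S : Finset ι} {x : ι → ℝ} {m : ι}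

lemma exists_le_esym_erase (k : ℕ) (S : Finset ι) {c X : ℝ} (hc : 0 < c) (hX : 0 < X) :
    ∃ ε : ℝ, 0 < ε ∧ ∀ x : ι → ℝ, (∀ i ∈ S, 0 ≤ x i) → ∀ m ∈ S, x m ≤ X →
      c ≤ esym (k + 1) S x → ε ≤ esym k (S.erase m) x := by
  obtain rfl | hk := eq_or_ne k 0
  · exact ⟨1, one_pos, fun x _ m _ _ _ => (esym_zero _ x).ge⟩
  set r : ℝ := min 1 (c / (2 * 2 ^ S.card))
  have hr0 : 0 < r := lt_min one_pos (by positivity)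
  refine ⟨min (r ^ k) (c / (2 * X)), lt_min (by positivity) (by positivity),
    fun x hx m hm hxm hσ => ?_⟩
  have hx' : ∀ i ∈ S.erase m, 0 ≤ x i := fun i hi => hx i (Finset.mem_of_mem_erase hi)
  rcases le_total (r ^ k) (esym k (S.erase m) x) with hlarge | hsmall
  · exact (min_le_left _ _).trans hlarge
  have hsucc : esym (k + 1) (S.erase m) x ≤ c / 2 :=
    calc esym (k + 1) (S.erase m) x
        ≤ (S.erase m).card.choose (k + 1) * r ^ (k + 1) :=
          esym_succ_le_of_esym_le_pow hk hx' hr0.le hsmall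
      _ ≤ 2 ^ S.card * r := by
          have hchoose : (S.erase m).card.choose (k + 1) ≤ 2 ^ S.card :=
            (Nat.choose_le_two_pow _ _).trans
              (Nat.pow_le_pow_right two_pos (Finset.card_le_card (Finset.erase_subset m S)))
          gcongr
          · exact_mod_cast hchoose
          · exact pow_le_of_le_one hr0.le (min_le_left _ _) k.succ_ne_zero
      _ ≤ 2 ^ S.card * (c / (2 * 2 ^ S.card)) := by gcongr; exact min_le_right _ _
      _ = c / 2 := by field_simp
  have hexpand := esym_succ_eq_mul_esym_erase_add k hm x
  have hmul : x m * esym k (S.erase m) x ≤ X * esym k (S.erase m) x :=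
    mul_le_mul_of_nonneg_right hxm (esym_nonneg hx')
  refine (min_le_right _ _).trans ?_
  rw [div_le_iff₀ (by positivity)]
  linarith

lemma le_of_sum_esymLogDeriv_sub_mul_sub_le (hk : k + 1 ≤ S.card) (hx : ∀ i ∈ S, 0 < x i)
    (hm : m ∈ S) {c D : ℝ} (hc : 0 < c) (hsum : c ≤ ∑ i ∈ S, esymLogDeriv k S x i)
    (hpm : 2 * S.card * esymLogDeriv k S x m ≤ c)
    (hbound : ∑ i ∈ S, (esymLogDeriv k S x i - esymLogDeriv k S x m) * (x m - x i) ≤ D) :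
    x m ≤ 2 * (D + (k + 1)) / c := by
  rw [sum_sub_mul_sub_eq, sum_esymLogDeriv_mul_self hk hx] at hbound
  have hxm : 0 ≤ x m := (hx m hm).le
  have htrace : 0 ≤ esymLogDeriv k S x m * ∑ i ∈ S, x i :=
    mul_nonneg (esymLogDeriv_nonneg (fun i hi => (hx i hi).le) m)
      (Finset.sum_nonneg fun i hi => (hx i hi).le)
  rw [le_div_iff₀ hc]
  linarith [mul_le_mul_of_nonneg_left hsum hxm, mul_le_mul_of_nonneg_left hpm hxm]

/-- Either `∂_m log σ_{k+1}` is comparable with its trace, or the hypothesis bounds `x m`, and then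
`σ_k` of the remaining variables cannot degenerate. -/
lemma exists_le_esymLogDeriv (hk : k + 1 ≤ S.card) {K κ : ℝ} (hK : 1 ≤ K) (hκ : 0 < κ) :
    ∃ δ : ℝ, 0 < δ ∧ ∀ x : ι → ℝ, (∀ i ∈ S, 0 < x i) → K⁻¹ ≤ esym (k + 1) S x →
      esym (k + 1) S x ≤ K → ∀ m ∈ S,
      κ * ∑ i ∈ S, (esymLogDeriv k S x i - esymLogDeriv k S x m) * (x m - x i) ≤ K →
      δ ≤ esymLogDeriv k S x m := by
  have hcard : (0 : ℝ) < S.card := by exact_mod_cast k.succ_pos.trans_le hk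
  set c : ℝ := (k + 1) / K
  have hc : 0 < c := by positivity
  obtain ⟨ε, hε, hesym⟩ := exists_le_esym_erase k S (c := K⁻¹) (X := 2 * (K / κ + (k + 1)) / c)
    (by positivity) (by positivity)
  refine ⟨min (c / (2 * S.card)) (ε / K), lt_min (by positivity) (by positivity),
    fun x hx hlower hupper m hm hbound => ?_⟩
  rcases le_total (c / (2 * S.card)) (esymLogDeriv k S x m) with hlarge | hsmall
  · exact (min_le_left _ _).trans hlarge
  have hxm : x m ≤ 2 * (K / κ + (k + 1)) / c :=
    le_of_sum_esymLogDeriv_sub_mul_sub_le hk hx hm hc (div_le_sum_esymLogDeriv hk hx hK hupper)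
      (by rwa [le_div_iff₀' (by positivity)] at hsmall) (by rwa [le_div_iff₀' hκ])
  calc min (c / (2 * S.card)) (ε / K) ≤ ε / K := min_le_right _ _
    _ ≤ esym k (S.erase m) x / esym (k + 1) S x := by
        have hle := hesym x (fun i hi => (hx i hi).le) m hm hxm hlower
        exact div_le_div₀ (hε.le.trans hle) hle (esym_pos hk hx) hupper

end LowerBound

section Hadamard

variable {m : Type*} [Fintype m] [DecidableEq m] {M : Matrix m m ℝ}

lemma det_eq_zero_of_posSemidef_of_diag_eq_zero (hM : M.PosSemidef) {i : m} (hi : M i i = 0) :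
    M.det = 0 := by
  rw [← Matrix.exists_mulVec_eq_zero_iff]
  refine ⟨Pi.single i 1, by simp, ?_⟩
  rw [← hM.dotProduct_mulVec_zero_iff]
  simp [hi]

lemma det_le_one_of_posSemidef_of_diag_eq_one (hM : M.PosSemidef) (hdiag : ∀ i, M i i = 1) :
    M.det ≤ 1 := by
  have htrace : ∑ i, hM.1.eigenvalues i = Fintype.card m := by
    simpa [Matrix.trace, hdiag] using hM.1.trace_eq_sum_eigenvalues.symm
  calc M.det = ∏ i, hM.1.eigenvalues i := by simpa using hM.1.det_eq_prod_eigenvalues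
    _ ≤ ∏ i, Real.exp (hM.1.eigenvalues i - 1) :=
        Finset.prod_le_prod (fun i _ => hM.eigenvalues_nonneg i) fun i _ => by
          linarith [Real.add_one_le_exp (hM.1.eigenvalues i - 1)]
    _ = 1 := by rw [← Real.exp_sum, Finset.sum_sub_distrib, htrace]; simp

lemma det_le_prod_diag_of_posSemidef (hM : M.PosSemidef) : M.det ≤ ∏ i, M i i := by
  by_cases hzero : ∃ i, M i i = 0
  · obtain ⟨i, hi⟩ := hzero
    rw [det_eq_zero_of_posSemidef_of_diag_eq_zero hM hi]
    exact Finset.prod_nonneg fun i _ => hM.diag_nonneg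
  push Not at hzero
  have hpos : ∀ i, 0 < M i i := fun i => lt_of_le_of_ne hM.diag_nonneg (hzero i).symm
  set D : Matrix m m ℝ := Matrix.diagonal fun i => (√(M i i))⁻¹ with hD
  have hscaled : (D * M * D).PosSemidef := by
    simpa [hD, Matrix.diagonal_conjTranspose] using hM.conjTranspose_mul_mul_same D
  have hsq : ∀ i, (√(M i i))⁻¹ * (√(M i i))⁻¹ = (M i i)⁻¹ := fun i => by
    rw [← mul_inv, Real.mul_self_sqrt (hpos i).le]
  have hdiag : ∀ i, (D * M * D) i i = 1 := fun i => by
    rw [hD, Matrix.mul_diagonal, Matrix.diagonal_mul, mul_right_comm, hsq,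
      inv_mul_cancel₀ (hpos i).ne']
  have hdet : (D * M * D).det = (∏ i, M i i)⁻¹ * M.det := by
    rw [Matrix.det_mul, Matrix.det_mul, mul_right_comm, hD, Matrix.det_diagonal,
      ← Finset.prod_mul_distrib, Finset.prod_congr rfl fun i _ => hsq i, Finset.prod_inv_distrib]
  have hle := det_le_one_of_posSemidef_of_diag_eq_one hscaled hdiag
  rwa [hdet, inv_mul_le_one₀ (Finset.prod_pos fun i _ => hpos i)] at hle

end Hadamard

section BilinearForms

variable {E : Type*} [NormedAddCommGroup E] [InnerProductSpace ℝ E]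

lemma exists_orthonormalBasis_sum_of_orthonormal [FiniteDimensional ℝ E] {κ ι : Type*} [Fintype κ]
    [Fintype ι] {v : κ → E} (hv : Orthonormal ℝ v) {w : ι → E} (hw : Orthonormal ℝ w)
    (hvw : ∀ i j, ⟪v i, w j⟫ = 0) (hcard : Module.finrank ℝ E = Fintype.card κ + Fintype.card ι) :
    ∃ b : OrthonormalBasis (κ ⊕ ι) ℝ E, (∀ i, b (Sum.inl i) = v i) ∧ ∀ j, b (Sum.inr j) = w j := by
  have hsum : Orthonormal ℝ (Sum.elim v w) := by
    refine ⟨?_, ?_⟩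
    · rintro (i | i)
      exacts [hv.1 i, hw.1 i]
    · rintro (i | i) (j | j) hij
      · exact hv.2 fun h => hij (congrArg Sum.inl h)
      · exact hvw i j
      · exact (real_inner_comm _ _).trans (hvw j i)
      · exact hw.2 fun h => hij (congrArg Sum.inr h)
  have huniv : Orthonormal ℝ (Set.univ.domRestrict (Sum.elim v w)) :=
    hsum.comp _ Subtype.val_injective
  obtain ⟨b, hb⟩ := huniv.exists_orthonormalBasis_extension_of_card_eq
    (by rw [hcard, Fintype.card_sum])
  exact ⟨b, fun i => hb _ (mem_univ _), fun j => hb _ (mem_univ _)⟩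

/-- A reflection rotates the plane spanned by `b p` and `b q` while fixing the other vectors. -/
lemma exists_orthonormalBasis_of_inner_eq_zero {ι : Type*} [Fintype ι]
    (b : OrthonormalBasis ι ℝ E) {p q : ι} {x : E} (hx : ‖x‖ = 1)
    (hbx : ∀ i, i ≠ p → i ≠ q → ⟪b i, x⟫ = 0) :
    ∃ c : OrthonormalBasis ι ℝ E, c p = x ∧ ∀ i, i ≠ p → i ≠ q → c i = b i := by
  refine ⟨b.map ((ℝ ∙ (b p - x))ᗮ.reflection), ?_, fun i hip hiq => ?_⟩
  · rw [OrthonormalBasis.map_apply, Submodule.reflection_sub (by rw [b.orthonormal.1 p, hx])]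
  · rw [OrthonormalBasis.map_apply, Submodule.reflection_mem_subspace_eq_self]
    rw [Submodule.mem_orthogonal_singleton_iff_inner_left, inner_sub_right, hbx i hip hiq,
      b.orthonormal.2 hip, sub_zero]

variable [FiniteDimensional ℝ E]

/-- The linear operator representing a bilinear form. -/
def formOp (B : E →L[ℝ] E →L[ℝ] ℝ) : E →ₗ[ℝ] E :=
  ((InnerProductSpace.toDual ℝ E).symm.toLinearEquiv.toLinearMap).comp
    (B.flip : E →L[ℝ] E →L[ℝ] ℝ).toLinearMap

lemma inner_formOp (B : E →L[ℝ] E →L[ℝ] ℝ) (v w : E) : ⟪formOp B w, v⟫ = B v w := by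
  simp [formOp, InnerProductSpace.toDual_symm_apply]

lemma isSymmetric_formOp {B : E →L[ℝ] E →L[ℝ] ℝ} (hB : ∀ v w, B v w = B w v) :
    (formOp B).IsSymmetric := fun v w => by
  rw [inner_formOp, real_inner_comm, inner_formOp, hB]

lemma isPositive_formOp {B : E →L[ℝ] E →L[ℝ] ℝ} (hB : ∀ v w, B v w = B w v)
    (hpos : ∀ v, 0 ≤ B v v) : (formOp B).IsPositive :=
  ⟨isSymmetric_formOp hB, fun v => by simpa [inner_formOp] using hpos v⟩

lemma toMatrix_formOp {ι : Type*} [Fintype ι] [DecidableEq ι] (B : E →L[ℝ] E →L[ℝ] ℝ)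
    (b : OrthonormalBasis ι ℝ E) :
    LinearMap.toMatrix b.toBasis b.toBasis (formOp B) = Matrix.of fun i j => B (b i) (b j) := by
  ext i j
  simp only [LinearMap.toMatrix_apply, OrthonormalBasis.coe_toBasis,
    OrthonormalBasis.coe_toBasis_repr_apply, OrthonormalBasis.repr_apply_apply, Matrix.of_apply]
  rw [real_inner_comm, inner_formOp]

lemma exists_orthonormalBasis_diagonal {B : E →L[ℝ] E →L[ℝ] ℝ} (hB : ∀ v w, B v w = B w v) {d : ℕ}
    (hd : Module.finrank ℝ E = d) :
    ∃ b : OrthonormalBasis (Fin d) ℝ E, ∀ i j, i ≠ j → B (b i) (b j) = 0 := by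
  have hsymm := isSymmetric_formOp hB
  refine ⟨hsymm.eigenvectorBasis hd, fun i j hij => ?_⟩
  rw [← inner_formOp, hsymm.apply_eigenvectorBasis, inner_smul_left,
    (hsymm.eigenvectorBasis hd).orthonormal.2 hij.symm, mul_zero]

lemma exists_orthonormalBasis_sum_diagonal {B : E →L[ℝ] E →L[ℝ] ℝ} (hB : ∀ v w, B v w = B w v)
    {κ : Type*} [Fintype κ] {v : κ → E} (hv : Orthonormal ℝ v) {d : ℕ}
    (hd : Module.finrank ℝ E = Fintype.card κ + d) (hvv : ∀ i j, i ≠ j → B (v i) (v j) = 0)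
    (hvperp : ∀ i w, (∀ j, ⟪v j, w⟫ = 0) → B (v i) w = 0) :
    ∃ b : OrthonormalBasis (κ ⊕ Fin d) ℝ E,
      (∀ i, b (Sum.inl i) = v i) ∧ ∀ i j, i ≠ j → B (b i) (b j) = 0 := by
  set W : Submodule ℝ E := Submodule.span ℝ (Set.range v)
  have hW : Module.finrank ℝ Wᗮ = d := by
    have hspan : Module.finrank ℝ W = Fintype.card κ :=
      finrank_span_eq_card hv.linearIndependent
    have := W.finrank_add_finrank_orthogonal
    omega
  have hperp : ∀ (i : κ) (w : Wᗮ), ⟪v i, (w : E)⟫ = 0 := fun i w =>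
    (Submodule.mem_orthogonal W _).1 w.2 _ (Submodule.subset_span ⟨i, rfl⟩)
  obtain ⟨e, he⟩ := exists_orthonormalBasis_diagonal
    (B := B.bilinearComp Wᗮ.subtypeL Wᗮ.subtypeL) (fun x y => hB x y) hW
  obtain ⟨b, hbv, hbe⟩ := exists_orthonormalBasis_sum_of_orthonormal hv
    (e.orthonormal.comp_linearIsometry Wᗮ.subtypeₗᵢ) (fun i j => hperp i (e j)) (by simpa using hd)
  refine ⟨b, hbv, ?_⟩
  rintro (i | i) (j | j) hij
  · rw [hbv, hbv, hvv i j fun h => hij (congrArg Sum.inl h)]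
  · rw [hbv, hbe]
    exact hvperp i _ fun k => hperp k _
  · rw [hbv, hbe, hB]
    exact hvperp j _ fun k => hperp k _
  · rw [hbe, hbe]
    exact he i j fun h => hij (congrArg Sum.inr h)

end BilinearForms

section SigmaElem

variable {n k : ℕ} {G : V n → ℝ} {u : V n} {ι : Type*} [Fintype ι]

lemma sigmaElem_eq_sum_minors [DecidableEq ι] (hk : k ≤ n + 1) (G : V n → ℝ) (u : V n)
    (b : OrthonormalBasis ι ℝ (V n)) :
    sigmaElem n k G u = ∑ s ∈ (Finset.univ : Finset ι).powersetCard k,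
      ((Matrix.of fun i j => hessQ n G u (b i) (b j)).submatrix
        (Subtype.val : s → ι) (Subtype.val : s → ι)).det := by
  have hcard : Fintype.card ι = n + 1 := by
    simpa using (Module.finrank_eq_card_basis b.toBasis).symm
  have hhess : hessM n G u = LinearMap.toMatrix (EuclideanSpace.basisFun (Fin (n + 1)) ℝ).toBasis
      (EuclideanSpace.basisFun (Fin (n + 1)) ℝ).toBasis (formOp (fderiv ℝ (fderiv ℝ G) u)) := by
    rw [toMatrix_formOp]
    ext i j
    simp [hessM]
  have hcoeff := Matrix.charpoly_coeff_eq_sum_minors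
    (Matrix.of fun i j => hessQ n G u (b i) (b j)) k (hcard.symm ▸ hk)
  rw [sigmaElem, hhess, LinearMap.charpoly_toMatrix, ← LinearMap.charpoly_toMatrix _ b.toBasis,
    toMatrix_formOp]
  rw [hcard] at hcoeff
  rw [show (Matrix.of fun i j => fderiv ℝ (fderiv ℝ G) u (b i) (b j)) =
    Matrix.of fun i j => hessQ n G u (b i) (b j) from rfl, hcoeff, ← mul_assoc, ← mul_pow]
  simp

lemma sigmaElem_le_esym (hk : k ≤ n + 1) (hsymm : ∀ v w, hessQ n G u v w = hessQ n G u w v)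
    (hpos : ∀ v, 0 ≤ hessQ n G u v v) (b : OrthonormalBasis ι ℝ (V n)) :
    sigmaElem n k G u ≤ esym k Finset.univ fun i => hessQ n G u (b i) (b i) := by
  classical
  have hM : (Matrix.of fun i j => hessQ n G u (b i) (b j)).PosSemidef := by
    have hpositive := LinearMap.posSemidef_toMatrix_iff b |>.2 (isPositive_formOp hsymm hpos)
    rwa [toMatrix_formOp] at hpositive
  rw [sigmaElem_eq_sum_minors hk G u b, esym]
  refine Finset.sum_le_sum fun s _ =>
    (det_le_prod_diag_of_posSemidef (hM.submatrix _)).trans (le_of_eq ?_)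
  exact Finset.prod_coe_sort s fun i => hessQ n G u (b i) (b i)

lemma sigmaElem_eq_esym (hk : k ≤ n + 1) (b : OrthonormalBasis ι ℝ (V n))
    (hb : ∀ i j, i ≠ j → hessQ n G u (b i) (b j) = 0) :
    sigmaElem n k G u = esym k Finset.univ fun i => hessQ n G u (b i) (b i) := by
  classical
  have hM : (Matrix.of fun i j => hessQ n G u (b i) (b j)) =
      Matrix.diagonal fun i => hessQ n G u (b i) (b i) := by
    ext i j
    obtain rfl | hij := eq_or_ne i j
    · simp
    · simp [hij, hb i j hij]
  rw [sigmaElem_eq_sum_minors hk G u b, hM, esym]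
  refine Finset.sum_congr rfl fun s _ => ?_
  rw [Matrix.submatrix_diagonal _ _ Subtype.val_injective, Matrix.det_diagonal]
  exact Finset.prod_coe_sort s fun i => hessQ n G u (b i) (b i)

lemma sigmaElem_one_eq_sum (G : V n → ℝ) (u : V n) (b : OrthonormalBasis ι ℝ (V n)) :
    sigmaElem n 1 G u = ∑ i, hessQ n G u (b i) (b i) := by
  classical
  rw [sigmaElem_eq_sum_minors (by omega) G u b, Finset.powersetCard_one, Finset.sum_map]
  exact Finset.sum_congr rfl fun i _ => by simp [Matrix.det_unique, Finset.default_singleton]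

end SigmaElem

section Calculus

variable {E : Type*} [NormedAddCommGroup E] [NormedSpace ℝ E] {f g : E → ℝ} {x u : E}

/-- The directional derivative `∂_v f` as a function of the base point. -/
def dirDeriv (v : E) (f : E → ℝ) (x : E) : ℝ := fderiv ℝ f x v

/-- The second directional derivative `∂_v ∂_v f`, as the value of the Hessian form on `(v, v)`. -/
def secondDeriv (v : E) (f : E → ℝ) (x : E) : ℝ := fderiv ℝ (fderiv ℝ f) x v v

/-- The second derivative of `f` at `u` along the great circle through `u` with velocity `e`, that
is, the Hessian of `f` with respect to the unit sphere. -/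
def sphHess (e : E) (f : E → ℝ) (u : E) : ℝ := secondDeriv e f u - dirDeriv u f u

lemma dirDeriv_congr (h : f =ᶠ[𝓝 x] g) (v : E) : dirDeriv v f =ᶠ[𝓝 x] dirDeriv v g := by
  filter_upwards [h.fderiv (𝕜 := ℝ)] with y hy
  rw [dirDeriv, hy, dirDeriv]

lemma contDiffAt_dirDeriv {m k : WithTop ℕ∞} (hf : ContDiffAt ℝ k f x) (hmk : m + 1 ≤ k) (v : E) :
    ContDiffAt ℝ m (dirDeriv v f) x :=
  (hf.fderiv_right hmk).clm_apply contDiffAt_const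

lemma contDiffAt_secondDeriv {m k : WithTop ℕ∞} (hf : ContDiffAt ℝ k f x) (hmk : m + 1 + 1 ≤ k)
    (v : E) : ContDiffAt ℝ m (secondDeriv v f) x :=
  (((hf.fderiv_right hmk).fderiv_right le_rfl).clm_apply contDiffAt_const).clm_apply
    contDiffAt_const

lemma fderiv_fderiv_apply (hf : ContDiffAt ℝ 2 f x) (v w : E) :
    fderiv ℝ (fderiv ℝ f) x v w = dirDeriv v (dirDeriv w f) x := by
  have hdiff : DifferentiableAt ℝ (fderiv ℝ f) x :=
    (hf.fderiv_right (m := 1) (by norm_num)).differentiableAt (by norm_num)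
  change _ = fderiv ℝ (fun y => fderiv ℝ f y w) x v
  rw [fderiv_clm_apply hdiff (differentiableAt_const w)]
  simp

lemma fderiv_fderiv_comm (hf : ContDiffAt ℝ 2 f x) (v w : E) :
    fderiv ℝ (fderiv ℝ f) x v w = fderiv ℝ (fderiv ℝ f) x w v :=
  (hf.isSymmSndFDerivAt (by simp)).eq v w

lemma dirDeriv_comm (hf : ContDiffAt ℝ 2 f x) (v w : E) :
    dirDeriv v (dirDeriv w f) =ᶠ[𝓝 x] dirDeriv w (dirDeriv v f) := by
  filter_upwards [hf.eventually (by simp)] with y hy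
  rw [← fderiv_fderiv_apply hy, fderiv_fderiv_comm hy, fderiv_fderiv_apply hy]

lemma secondDeriv_eventuallyEq (hf : ContDiffAt ℝ 2 f x) (v : E) :
    secondDeriv v f =ᶠ[𝓝 x] dirDeriv v (dirDeriv v f) := by
  filter_upwards [hf.eventually (by simp)] with y hy using fderiv_fderiv_apply hy v v

lemma secondDeriv_dirDeriv_comm (hf : ContDiffAt ℝ 3 f x) (v w : E) :
    secondDeriv v (dirDeriv w f) =ᶠ[𝓝 x] dirDeriv w (secondDeriv v f) := by
  have hf₂ : ContDiffAt ℝ 2 f x := hf.of_le (by norm_num)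
  have hdf : ∀ z, ContDiffAt ℝ 2 (dirDeriv z f) x := contDiffAt_dirDeriv hf (by norm_num)
  calc secondDeriv v (dirDeriv w f)
      =ᶠ[𝓝 x] dirDeriv v (dirDeriv v (dirDeriv w f)) := secondDeriv_eventuallyEq (hdf w) v
    _ =ᶠ[𝓝 x] dirDeriv v (dirDeriv w (dirDeriv v f)) := dirDeriv_congr (dirDeriv_comm hf₂ v w) v
    _ =ᶠ[𝓝 x] dirDeriv w (dirDeriv v (dirDeriv v f)) := dirDeriv_comm (hdf v) v w
    _ =ᶠ[𝓝 x] dirDeriv w (secondDeriv v f) :=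
        dirDeriv_congr (secondDeriv_eventuallyEq hf₂ v).symm w

lemma secondDeriv_comm (hf : ContDiffAt ℝ 4 f x) (v w : E) :
    secondDeriv v (secondDeriv w f) x = secondDeriv w (secondDeriv v f) x := by
  have hf₃ : ContDiffAt ℝ 3 f x := hf.of_le (by norm_num)
  have hdf : ContDiffAt ℝ 3 (dirDeriv v f) x := contDiffAt_dirDeriv hf (by norm_num) v
  have hsecond : ∀ z, ContDiffAt ℝ 2 (secondDeriv z f) x :=
    contDiffAt_secondDeriv hf (by norm_num)
  calc secondDeriv v (secondDeriv w f) x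
      = dirDeriv v (dirDeriv v (secondDeriv w f)) x := fderiv_fderiv_apply (hsecond w) v v
    _ = dirDeriv v (secondDeriv w (dirDeriv v f)) x :=
        (dirDeriv_congr (secondDeriv_dirDeriv_comm hf₃ w v).symm v).eq_of_nhds
    _ = secondDeriv w (dirDeriv v (dirDeriv v f)) x :=
        (secondDeriv_dirDeriv_comm hdf w v).eq_of_nhds.symm
    _ = secondDeriv w (secondDeriv v f) x := by
        rw [secondDeriv, secondDeriv,
          (secondDeriv_eventuallyEq (hf.of_le (by norm_num)) v).fderiv.fderiv_eq]

lemma dirDeriv_self_dirDeriv {m : ℝ} (hf : ContDiffAt ℝ 2 f x)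
    (heuler : ∀ᶠ y in 𝓝 x, dirDeriv y f y = m * f y) (w : E) :
    dirDeriv x (dirDeriv w f) x = (m - 1) * dirDeriv w f x := by
  have hdiff : DifferentiableAt ℝ (fderiv ℝ f) x :=
    (hf.fderiv_right (m := 1) (by norm_num)).differentiableAt (by norm_num)
  have hleft : fderiv ℝ (fun y => fderiv ℝ f y y) x w =
      fderiv ℝ f x w + fderiv ℝ (fderiv ℝ f) x w x := by
    rw [fderiv_clm_apply hdiff differentiableAt_fun_id]
    simp
  have hright : fderiv ℝ (fun y => m * f y) x w = m * fderiv ℝ f x w := by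
    rw [fderiv_const_mul (hf.differentiableAt (by norm_num))]
    simp
  rw [← fderiv_fderiv_apply hf, fderiv_fderiv_comm hf, dirDeriv]
  have hmain := congrArg (fun L => L w) (EventuallyEq.fderiv_eq (𝕜 := ℝ) heuler)
  simp only [dirDeriv] at hmain
  linarith

lemma secondDeriv_eq_iteratedFDeriv (v : E) (f : E → ℝ) (x : E) :
    secondDeriv v f x = iteratedFDeriv ℝ 2 f x ![v, v] := by
  simp [iteratedFDeriv_two_apply, secondDeriv]

lemma dirDeriv_neg (e : E) (f : E → ℝ) (u : E) : dirDeriv (-e) f u = -dirDeriv e f u :=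
  map_neg _ e

lemma dirDeriv_add (hf : DifferentiableAt ℝ f u) (hg : DifferentiableAt ℝ g u) (e : E) :
    dirDeriv e (fun x => f x + g x) u = dirDeriv e f u + dirDeriv e g u := by
  rw [dirDeriv, fderiv_fun_add hf hg]
  rfl

lemma dirDeriv_const_mul (hf : DifferentiableAt ℝ f u) (c : ℝ) (e : E) :
    dirDeriv e (fun x => c * f x) u = c * dirDeriv e f u := by
  rw [dirDeriv, fderiv_const_mul hf]
  rfl

lemma dirDeriv_sum {ι : Type*} {S : Finset ι} {h : ι → E → ℝ}
    (hh : ∀ i ∈ S, DifferentiableAt ℝ (h i) u) (e : E) :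
    dirDeriv e (fun x => ∑ i ∈ S, h i x) u = ∑ i ∈ S, dirDeriv e (h i) u := by
  rw [dirDeriv, fderiv_fun_sum hh, _root_.sum_apply]
  rfl

lemma sphHess_add (hf : ContDiffAt ℝ 2 f u) (hg : ContDiffAt ℝ 2 g u) (e : E) :
    sphHess e (fun x => f x + g x) u = sphHess e f u + sphHess e g u := by
  simp only [sphHess, dirDeriv, secondDeriv_eq_iteratedFDeriv]
  rw [fun_iteratedFDeriv_add_apply (i := 2) hf hg,
    fderiv_fun_add (hf.differentiableAt (by norm_num)) (hg.differentiableAt (by norm_num))]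
  simp only [_root_.add_apply]
  ring

lemma sphHess_const_mul (hf : ContDiffAt ℝ 2 f u) (c : ℝ) (e : E) :
    sphHess e (fun x => c * f x) u = c * sphHess e f u := by
  simp only [sphHess, dirDeriv, secondDeriv_eq_iteratedFDeriv, ← smul_eq_mul (a := c)]
  rw [iteratedFDeriv_const_smul_apply' (i := 2) hf,
    fderiv_fun_const_smul (hf.differentiableAt (by norm_num))]
  simp only [_root_.smul_apply, smul_eq_mul]
  ring

lemma sphHess_sum {ι : Type*} {S : Finset ι} {h : ι → E → ℝ}
    (hh : ∀ i ∈ S, ContDiffAt ℝ 2 (h i) u) (e : E) :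
    sphHess e (fun x => ∑ i ∈ S, h i x) u = ∑ i ∈ S, sphHess e (h i) u := by
  simp only [sphHess, dirDeriv, secondDeriv_eq_iteratedFDeriv]
  rw [iteratedFDeriv_fun_sum_apply (n := 2) hh,
    fderiv_fun_sum fun i hi => (hh i hi).differentiableAt (by norm_num)]
  simp only [_root_.sum_apply, Finset.sum_sub_distrib]

lemma sphHess_clm (L : E →L[ℝ] ℝ) (u e : E) : sphHess e L u = -L u := by
  have hconst : fderiv ℝ (L : E → ℝ) = fun _ => L := funext fun _ => L.fderiv
  simp [sphHess, secondDeriv, dirDeriv, hconst]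

lemma exists_bound_dirDeriv_secondDeriv {s : Set E} (hs : IsCompact s)
    (hf : ∀ u ∈ s, ContDiffAt ℝ 2 f u) :
    ∃ C, 0 ≤ C ∧ (∀ u ∈ s, |f u| ≤ C) ∧
      ∀ u ∈ s, ∀ e, ‖e‖ = 1 → |dirDeriv e f u| ≤ C ∧ |secondDeriv e f u| ≤ C := by
  have hf₁ : ∀ u ∈ s, ContDiffAt ℝ 1 (fderiv ℝ f) u := fun u hu =>
    (hf u hu).fderiv_right (by norm_num)
  have hf₂ : ∀ u ∈ s, ContDiffAt ℝ 0 (fderiv ℝ (fderiv ℝ f)) u := fun u hu =>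
    (hf₁ u hu).fderiv_right (by norm_num)
  obtain ⟨C₀, hC₀⟩ := hs.exists_bound_of_continuousOn fun u hu =>
    (hf u hu).continuousAt.continuousWithinAt
  obtain ⟨C₁, hC₁⟩ := hs.exists_bound_of_continuousOn fun u hu =>
    (hf₁ u hu).continuousAt.continuousWithinAt
  obtain ⟨C₂, hC₂⟩ := hs.exists_bound_of_continuousOn (E := E →L[ℝ] E →L[ℝ] ℝ) fun u hu =>
    (hf₂ u hu).continuousAt.continuousWithinAt
  refine ⟨|C₀| + (|C₁| + |C₂|), by positivity, fun u hu => ?_, fun u hu e he => ⟨?_, ?_⟩⟩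
  · have hbound : |f u| ≤ C₀ := hC₀ u hu
    linarith [le_abs_self C₀, abs_nonneg C₁, abs_nonneg C₂]
  · have hbound : |dirDeriv e f u| ≤ ‖fderiv ℝ f u‖ := by
      simpa [dirDeriv, he] using (fderiv ℝ f u).le_opNorm e
    linarith [hC₁ u hu, le_abs_self C₁, abs_nonneg C₀, abs_nonneg C₂]
  · have hbound : |secondDeriv e f u| ≤ ‖fderiv ℝ (fderiv ℝ f) u‖ := by
      simpa [secondDeriv, he] using (fderiv ℝ (fderiv ℝ f) u).le_opNorm₂ e e
    linarith [hC₂ u hu, le_abs_self C₂, abs_nonneg C₀, abs_nonneg C₁]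

end Calculus

section Arc

variable {E : Type*} [NormedAddCommGroup E] [NormedSpace ℝ E] {f : E → ℝ} {a u e : E} {s : Set E}

/-- The elliptic arc with centre `a` through `u` with velocity `e`. It is the great circle when
`a = 0` and the parallel of a spherical cap when `a` lies on the axis of the cap. -/
def arc (a u e : E) (t : ℝ) : E := u + ((Real.cos t - 1) • (u - a) + Real.sin t • e)

lemma arc_zero (a u e : E) : arc a u e 0 = u := by simp [arc]

lemma arc_center_zero (u e : E) (t : ℝ) : arc 0 u e t = Real.cos t • u + Real.sin t • e := by
  rw [arc, sub_zero, sub_smul, one_smul]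
  abel

lemma hasDerivAt_arc (a u e : E) (t : ℝ) :
    HasDerivAt (arc a u e) (-Real.sin t • (u - a) + Real.cos t • e) t :=
  ((((Real.hasDerivAt_cos t).sub_const 1).smul_const (u - a)).add
    ((Real.hasDerivAt_sin t).smul_const e)).const_add u

lemma tendsto_arc (a u e : E) : Tendsto (arc a u e) (𝓝 0) (𝓝 u) := by
  simpa only [arc_zero] using (hasDerivAt_arc a u e 0).continuousAt.tendsto

lemma hasDerivAt_comp_arc (hf : DifferentiableAt ℝ f u) (a e : E) :
    HasDerivAt (fun t => f (arc a u e t)) (dirDeriv e f u) 0 := by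
  have hf' : HasFDerivAt f (fderiv ℝ f u) (arc a u e 0) := by
    simpa only [arc_zero] using hf.hasFDerivAt
  exact (hf'.comp_hasDerivAt 0 (hasDerivAt_arc a u e 0)).congr_deriv (by simp [dirDeriv])

lemma deriv_deriv_comp_arc (hf : ContDiffAt ℝ 2 f u) (a e : E) :
    deriv (deriv fun t => f (arc a u e t)) 0 = secondDeriv e f u - dirDeriv (u - a) f u := by
  have hderiv : deriv (fun t => f (arc a u e t)) =ᶠ[𝓝 0] fun t =>
      fderiv ℝ f (arc a u e t) (-Real.sin t • (u - a) + Real.cos t • e) := by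
    filter_upwards [(tendsto_arc a u e).eventually (hf.eventually (by simp))] with t ht
    exact ((ht.differentiableAt (by norm_num)).hasFDerivAt.comp_hasDerivAt t
      (hasDerivAt_arc a u e t)).deriv
  have houter : HasFDerivAt (fderiv ℝ f) (fderiv ℝ (fderiv ℝ f) u) (arc a u e 0) := by
    rw [arc_zero]
    exact ((hf.fderiv_right (m := 1) (by norm_num)).differentiableAt (by norm_num)).hasFDerivAt
  have hvel : HasDerivAt (fun t => -Real.sin t • (u - a) + Real.cos t • e)
      (-Real.cos 0 • (u - a) + -Real.sin 0 • e) 0 :=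
    ((Real.hasDerivAt_sin 0).neg.smul_const (u - a)).add
      ((Real.hasDerivAt_cos 0).smul_const e)
  have hprod := (houter.comp_hasDerivAt 0 (hasDerivAt_arc a u e 0)).clm_apply hvel
  rw [hderiv.deriv_eq]
  refine hprod.deriv.trans ?_
  simp only [Real.sin_zero, neg_zero, zero_smul, Real.cos_zero, one_smul, zero_add,
    Function.comp_apply, arc_zero, neg_smul, neg_sub, add_zero, map_sub, secondDeriv, dirDeriv]
  ring

lemma deriv_deriv_nonneg_of_isLocalMin {h : ℝ → ℝ} {t : ℝ} (hmin : IsLocalMin h t)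
    (hcont : ContinuousAt h t) : 0 ≤ deriv (deriv h) t := by
  by_contra! hneg
  have hmax : IsLocalMax h t := isLocalMax_of_deriv_deriv_neg hneg hmin.deriv_eq_zero hcont
  have hconst : h =ᶠ[𝓝 t] fun _ => h t := by
    filter_upwards [hmin, hmax] with r hr hr' using le_antisymm hr' hr
  exact hneg.ne (by simp [hconst.deriv.deriv_eq])

lemma sphHess_nonneg_of_isMinOn (hmin : IsMinOn f s u) (hf : ContDiffAt ℝ 2 f u)
    (harc : ∀ᶠ t in 𝓝 0, arc 0 u e t ∈ s) : 0 ≤ sphHess e f u := by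
  have hloc : IsLocalMin (fun t => f (arc 0 u e t)) 0 := by
    filter_upwards [harc] with t ht
    simpa only [arc_zero] using isMinOn_iff.1 hmin _ ht
  have h := deriv_deriv_nonneg_of_isLocalMin hloc
    (hasDerivAt_comp_arc (hf.differentiableAt (by norm_num)) 0 e).continuousAt
  rwa [deriv_deriv_comp_arc hf, sub_zero] at h

lemma dirDeriv_nonneg_of_isMinOn (hmin : IsMinOn f s u) (hf : DifferentiableAt ℝ f u)
    (harc : ∀ᶠ t in 𝓝[>] 0, arc 0 u e t ∈ s) : 0 ≤ dirDeriv e f u := by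
  refine deriv_le_of_eventually_le_right (hasDerivAt_const 0 (f u)) (hasDerivAt_comp_arc hf 0 e)
    (by rw [arc_zero]) ?_
  filter_upwards [harc] with t ht using hmin ht

lemma dirDeriv_eq_zero_of_arc (hf : DifferentiableAt ℝ f u) (h : ∀ t, f (arc a u e t) = 0) :
    dirDeriv e f u = 0 := by
  have hd := (hasDerivAt_comp_arc hf a e).deriv
  rw [funext h, deriv_const] at hd
  exact hd.symm

lemma secondDeriv_eq_of_arc (hf : ContDiffAt ℝ 2 f u) (h : ∀ t, f (arc a u e t) = 0) :
    secondDeriv e f u = dirDeriv (u - a) f u := by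
  have hd := deriv_deriv_comp_arc hf a e
  rw [funext h, deriv_const', deriv_const] at hd
  linarith

end Arc

section Cap

variable {n : ℕ} {θ : ℝ} {u x ζ : V n} {G : V n → ℝ}

lemma sin_pos_of_mem_Ioo (hθ : θ ∈ Ioo 0 (π / 2)) : 0 < Real.sin θ :=
  Real.sin_pos_of_pos_of_lt_pi hθ.1 (by linarith [hθ.2, Real.pi_pos])

lemma cos_pos_of_mem_Ioo (hθ : θ ∈ Ioo 0 (π / 2)) : 0 < Real.cos θ :=
  Real.cos_pos_of_mem_Ioo ⟨by linarith [hθ.1, Real.pi_pos], hθ.2⟩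

lemma isCompact_sphCap (n : ℕ) (θ : ℝ) : IsCompact (sphCap n θ) := by
  refine (isCompact_sphere (0 : V n) 1).of_isClosed_subset ?_ fun u hu => by simpa using hu.1
  exact (isClosed_eq continuous_norm continuous_const).inter
    (isClosed_le continuous_const (by fun_prop : Continuous fun u : V n => u (Fin.last n)))

lemma sphCap_subset_coneCap (n : ℕ) (θ : ℝ) : sphCap n θ ⊆ coneCap n θ :=
  fun u hu => ⟨1, one_pos, u, hu, (one_smul ℝ u).symm⟩

lemma sphCapBdry_subset_sphCap (n : ℕ) (θ : ℝ) : sphCapBdry n θ ⊆ sphCap n θ :=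
  fun _ hu => ⟨hu.1, hu.2.ge⟩

lemma norm_Etop (n : ℕ) : ‖Etop n‖ = 1 := by simp [Etop]

lemma Etop_last (n : ℕ) : Etop n (Fin.last n) = 1 := by simp [Etop]

lemma inner_Etop (x : V n) : ⟪x, Etop n⟫ = x (Fin.last n) := by
  simp [Etop, EuclideanSpace.inner_single_right]

lemma apply_last_le_one (hu : u ∈ sphCap n θ) : u (Fin.last n) ≤ 1 := by
  simpa [hu.1] using (le_abs_self _).trans (PiLp.norm_apply_le u (Fin.last n))

lemma add_mem_sphCap (h : ζ ∈ capCap n θ) : ζ + Real.cos θ • Etop n ∈ sphCap n θ :=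
  ⟨h.2, by simpa [Etop_last] using h.1⟩

lemma forall_mem_sphCap_iff {P : V n → Prop} :
    (∀ u ∈ sphCap n θ, P u) ↔ ∀ ζ ∈ capCap n θ, P (ζ + Real.cos θ • Etop n) := by
  refine ⟨fun h ζ hζ => h _ (add_mem_sphCap hζ), fun h u hu => ?_⟩
  rw [← sub_add_cancel u (Real.cos θ • Etop n)]
  exact h _ ⟨by simpa [Etop_last] using hu.2, by simpa using hu.1⟩

/-- The interior of the cone over the cap `S^n_θ`. -/
def openCone (n : ℕ) (θ : ℝ) : Set (V n) := {x | Real.cos θ * ‖x‖ < x (Fin.last n)}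

lemma isOpen_openCone (n : ℕ) (θ : ℝ) : IsOpen (openCone n θ) :=
  isOpen_lt (by fun_prop) (by fun_prop)

lemma openCone_subset_coneCap (n : ℕ) (θ : ℝ) : openCone n θ ⊆ coneCap n θ := by
  intro x hx
  have hlt : Real.cos θ * ‖x‖ < x (Fin.last n) := hx
  have hx0 : x ≠ 0 := by rintro rfl; simp at hlt
  have hnorm : 0 < ‖x‖ := norm_pos_iff.2 hx0
  refine ⟨‖x‖, hnorm, ‖x‖⁻¹ • x, ⟨?_, ?_⟩, ?_⟩
  · rw [norm_smul, norm_inv, norm_norm, inv_mul_cancel₀ hnorm.ne']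
  · rw [PiLp.smul_apply, smul_eq_mul, inv_mul_eq_div, le_div_iff₀ hnorm]
    exact hlt.le
  · rw [smul_smul, mul_inv_cancel₀ hnorm.ne', one_smul]

lemma add_smul_Etop_mem_openCone (hθ : θ ∈ Ioo 0 (π / 2)) (hu : u ∈ sphCap n θ) {t : ℝ}
    (ht : 0 < t) : u + t • Etop n ∈ openCone n θ := by
  have hcos := cos_pos_of_mem_Ioo hθ
  have hcos_lt : Real.cos θ < 1 := by
    simpa using Real.cos_lt_cos_of_nonneg_of_le_pi_div_two le_rfl hθ.2.le hθ.1
  have hnorm : ‖u + t • Etop n‖ ≤ 1 + t := by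
    simpa [norm_smul, norm_Etop, hu.1, abs_of_pos ht] using norm_add_le u (t • Etop n)
  calc Real.cos θ * ‖u + t • Etop n‖ ≤ Real.cos θ * (1 + t) := by gcongr
    _ < Real.cos θ + t := by nlinarith
    _ ≤ (u + t • Etop n) (Fin.last n) := by simpa [Etop_last] using hu.2

lemma sphCap_subset_closure_openCone (hθ : θ ∈ Ioo 0 (π / 2)) :
    sphCap n θ ⊆ closure (openCone n θ) := by
  intro u hu
  have hpath : Tendsto (fun t : ℝ => u + t • Etop n) (𝓝[>] 0) (𝓝 u) := by
    have hcont : ContinuousAt (fun t : ℝ => u + t • Etop n) 0 := by fun_prop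
    simpa using hcont.tendsto.mono_left nhdsWithin_le_nhds
  refine mem_closure_of_tendsto hpath ?_
  filter_upwards [self_mem_nhdsWithin] with t ht using add_smul_Etop_mem_openCone hθ hu ht

lemma eq_of_eqOn_openCone (hθ : θ ∈ Ioo 0 (π / 2)) {f g : V n → ℝ} (hu : u ∈ sphCap n θ)
    (hf : ContinuousAt f u) (hg : ContinuousAt g u) (hfg : EqOn f g (openCone n θ)) :
    f u = g u :=
  tendsto_nhds_unique_of_frequently_eq hf hg
    ((mem_closure_iff_frequently.1 (sphCap_subset_closure_openCone hθ hu)).mono hfg)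

lemma continuousAt_dirDeriv_self (hG : ContDiffAt ℝ 1 G x) :
    ContinuousAt (fun y => dirDeriv y G y) x :=
  (hG.fderiv_right (m := 0) (by norm_num)).continuousAt.clm_apply continuousAt_id

/-- Euler's relation of degree `m` on the interior of the cone. It is stated on the open cone so
that it can be differentiated; `dirDeriv_self_eq` extends it to the cap. -/
def HasEulerDegree (n : ℕ) (θ m : ℝ) (f : V n → ℝ) : Prop :=
  ∀ x ∈ openCone n θ, dirDeriv x f x = m * f x

namespace HasEulerDegree

variable {m : ℝ} {f : V n → ℝ}

lemma dirDeriv_self_eq (h : HasEulerDegree n θ m f) (hθ : θ ∈ Ioo 0 (π / 2)) (hu : u ∈ sphCap n θ)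
    (hf : ContDiffAt ℝ 1 f u) : dirDeriv u f u = m * f u :=
  eq_of_eqOn_openCone hθ hu (continuousAt_dirDeriv_self hf)
    (continuousAt_const.mul hf.continuousAt) h

lemma dirDeriv (h : HasEulerDegree n θ m f) (hf : ∀ x ∈ coneCap n θ, ContDiffAt ℝ 2 f x) (w : V n) :
    HasEulerDegree n θ (m - 1) (dirDeriv w f) := fun x hx =>
  dirDeriv_self_dirDeriv (hf x (openCone_subset_coneCap n θ hx))
    (eventually_of_mem ((isOpen_openCone n θ).mem_nhds hx) h) w

lemma secondDeriv (h : HasEulerDegree n θ m f) (hf : ∀ x ∈ coneCap n θ, ContDiffAt ℝ 3 f x)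
    (w : V n) : HasEulerDegree n θ (m - 1 - 1) (secondDeriv w f) := fun x hx => by
  have hf₂ : ∀ y ∈ coneCap n θ, ContDiffAt ℝ 2 f y := fun y hy => (hf y hy).of_le (by norm_num)
  have hw := secondDeriv_eventuallyEq (hf₂ x (openCone_subset_coneCap n θ hx)) w
  rw [(dirDeriv_congr hw x).eq_of_nhds, hw.eq_of_nhds]
  exact (h.dirDeriv hf₂ w).dirDeriv
    (fun y hy => contDiffAt_dirDeriv (hf y hy) (by norm_num) w) w x hx

lemma secondDeriv_self (h : HasEulerDegree n θ m f) (hθ : θ ∈ Ioo 0 (π / 2))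
    (hf : ∀ x ∈ coneCap n θ, ContDiffAt ℝ 2 f x) (hu : u ∈ sphCap n θ) :
    _root_.secondDeriv u f u = (m - 1) * m * f u := by
  have hfu := hf u (sphCap_subset_coneCap n θ hu)
  rw [_root_.secondDeriv, fderiv_fderiv_apply hfu,
    (h.dirDeriv hf u).dirDeriv_self_eq hθ hu (contDiffAt_dirDeriv hfu (by norm_num) u),
    h.dirDeriv_self_eq hθ hu (hfu.of_le (by norm_num)), mul_assoc]

end HasEulerDegree

/-- `G` is positively 1-homogeneous on the cone over `S^n_θ` and of class `C⁴` near it. -/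
structure IsConeHomogeneous (n : ℕ) (θ : ℝ) (G : V n → ℝ) : Prop where
  contDiffAt : ∀ x ∈ coneCap n θ, ContDiffAt ℝ 4 G x
  hom : ∀ l : ℝ, 0 < l → ∀ u ∈ sphCap n θ, G (l • u) = l * G u

namespace IsConeHomogeneous

lemma smul_eq (hG : IsConeHomogeneous n θ G) (hx : x ∈ coneCap n θ) {l : ℝ} (hl : 0 < l) :
    G (l • x) = l * G x := by
  obtain ⟨r, hr, u, hu, rfl⟩ := hx
  rw [smul_smul, hG.hom _ (mul_pos hl hr) u hu, hG.hom r hr u hu, mul_assoc]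

lemma hasEulerDegree (hG : IsConeHomogeneous n θ G) : HasEulerDegree n θ 1 G := by
  intro x hx
  have hx' := openCone_subset_coneCap n θ hx
  have hdiff : HasFDerivAt G (fderiv ℝ G x) ((1 : ℝ) • x) := by
    rw [one_smul]
    exact ((hG.contDiffAt x hx').differentiableAt (by norm_num)).hasFDerivAt
  have hray : HasDerivAt (fun l : ℝ => l • x) x 1 := by
    simpa using (hasDerivAt_id (1 : ℝ)).smul_const x
  have hlin : HasDerivAt (fun l : ℝ => G (l • x)) (1 * G x) 1 := by
    refine ((hasDerivAt_id (1 : ℝ)).mul_const (G x)).congr_of_eventuallyEq ?_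
    filter_upwards [lt_mem_nhds (zero_lt_one' ℝ)] with l hl using hG.smul_eq hx' hl
  exact (hdiff.comp_hasDerivAt 1 hray).unique hlin

lemma hasEulerDegree_dirDeriv (hG : IsConeHomogeneous n θ G) (w : V n) :
    HasEulerDegree n θ 0 (dirDeriv w G) := by
  simpa using hG.hasEulerDegree.dirDeriv (fun x hx => (hG.contDiffAt x hx).of_le (by norm_num)) w

lemma hasEulerDegree_secondDeriv (hG : IsConeHomogeneous n θ G) (w : V n) :
    HasEulerDegree n θ (-1) (secondDeriv w G) := by
  simpa using
    hG.hasEulerDegree.secondDeriv (fun x hx => (hG.contDiffAt x hx).of_le (by norm_num)) w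

lemma contDiffAt_of_mem_sphCap (hG : IsConeHomogeneous n θ G) (hu : u ∈ sphCap n θ) :
    ContDiffAt ℝ 4 G u :=
  hG.contDiffAt u (sphCap_subset_coneCap n θ hu)

lemma contDiffAt_secondDeriv (hG : IsConeHomogeneous n θ G) (hu : u ∈ sphCap n θ) (w : V n) :
    ContDiffAt ℝ 2 (secondDeriv w G) u :=
  _root_.contDiffAt_secondDeriv (hG.contDiffAt_of_mem_sphCap hu) (by norm_num) w

lemma hessQ_comm (hG : IsConeHomogeneous n θ G) (hu : u ∈ sphCap n θ) (v w : V n) :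
    hessQ n G u v w = hessQ n G u w v :=
  fderiv_fderiv_comm ((hG.contDiffAt_of_mem_sphCap hu).of_le (by norm_num)) v w

lemma hessQ_self (hG : IsConeHomogeneous n θ G) (hθ : θ ∈ Ioo 0 (π / 2)) (hu : u ∈ sphCap n θ)
    (w : V n) : hessQ n G u u w = 0 := by
  have hGu := hG.contDiffAt_of_mem_sphCap hu
  rw [hessQ, fderiv_fderiv_apply (hGu.of_le (by norm_num)),
    (hG.hasEulerDegree_dirDeriv w).dirDeriv_self_eq hθ hu (contDiffAt_dirDeriv hGu (by norm_num) w),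
    zero_mul]

lemma dirDeriv_self_secondDeriv (hG : IsConeHomogeneous n θ G) (hθ : θ ∈ Ioo 0 (π / 2))
    (hu : u ∈ sphCap n θ) (w : V n) : dirDeriv u (secondDeriv w G) u = -secondDeriv w G u := by
  rw [(hG.hasEulerDegree_secondDeriv w).dirDeriv_self_eq hθ hu
    ((hG.contDiffAt_secondDeriv hu w).of_le (by norm_num)), neg_one_mul]

lemma dirDeriv_secondDeriv_self (hG : IsConeHomogeneous n θ G) (hθ : θ ∈ Ioo 0 (π / 2))
    (hu : u ∈ sphCap n θ) (w : V n) : dirDeriv w (secondDeriv u G) u = 0 := by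
  rw [← (secondDeriv_dirDeriv_comm
      ((hG.contDiffAt_of_mem_sphCap hu).of_le (by norm_num)) u w).eq_of_nhds,
    (hG.hasEulerDegree_dirDeriv w).secondDeriv_self hθ
      (fun x hx => contDiffAt_dirDeriv (hG.contDiffAt x hx) (by norm_num) w) hu]
  simp

lemma secondDeriv_secondDeriv_self (hG : IsConeHomogeneous n θ G) (hθ : θ ∈ Ioo 0 (π / 2))
    (hu : u ∈ sphCap n θ) (w : V n) :
    secondDeriv w (secondDeriv u G) u = 2 * secondDeriv w G u := by
  rw [secondDeriv_comm (hG.contDiffAt_of_mem_sphCap hu),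
    (hG.hasEulerDegree_secondDeriv w).secondDeriv_self hθ
      (fun x hx => _root_.contDiffAt_secondDeriv (hG.contDiffAt x hx) (by norm_num) w) hu]
  norm_num

end IsConeHomogeneous

end Cap

section LogBounds

variable {n : ℕ} {θ K : ℝ} {Φ : V n → ℝ} {u : V n}

/-- On the cap, `Φ` and `Φ⁻¹` are bounded by `K`, the gradient of `log Φ` is bounded above by `K`,
and its spherical Hessian is bounded below by `-K`. -/
structure HasLogBounds (n : ℕ) (θ : ℝ) (Φ : V n → ℝ) (K : ℝ) : Prop where
  contDiffAt : ∀ u ∈ sphCap n θ, ContDiffAt ℝ 2 (fun x => Real.log (Φ x)) u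
  one_le : 1 ≤ K
  inv_le : ∀ u ∈ sphCap n θ, K⁻¹ ≤ Φ u
  le : ∀ u ∈ sphCap n θ, Φ u ≤ K
  dirDeriv_le : ∀ u ∈ sphCap n θ, ∀ e : V n, ‖e‖ = 1 →
    dirDeriv e (fun x => Real.log (Φ x)) u ≤ K
  neg_le_sphHess : ∀ u ∈ sphCap n θ, ∀ e : V n, ‖e‖ = 1 →
    -K ≤ sphHess e (fun x => Real.log (Φ x)) u

lemma HasLogBounds.pos (h : HasLogBounds n θ Φ K) (hu : u ∈ sphCap n θ) : 0 < Φ u :=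
  (inv_pos.2 (one_pos.trans_le h.one_le)).trans_le (h.inv_le u hu)

lemma exists_hasLogBounds (hΦ : ∀ u ∈ sphCap n θ, ContDiffAt ℝ 2 Φ u)
    (hpos : ∀ u ∈ sphCap n θ, 0 < Φ u) : ∃ K, HasLogBounds n θ Φ K := by
  have hL : ∀ u ∈ sphCap n θ, ContDiffAt ℝ 2 (fun x => Real.log (Φ x)) u := fun u hu =>
    (hΦ u hu).log (hpos u hu).ne'
  obtain ⟨C, hC, hlog, hbound⟩ := exists_bound_dirDeriv_secondDeriv (isCompact_sphCap n θ) hL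
  have hK : 2 * C ≤ Real.exp (2 * C) := by linarith [Real.add_one_le_exp (2 * C)]
  refine ⟨Real.exp (2 * C), hL, Real.one_le_exp (by positivity), fun u hu => ?_, fun u hu => ?_,
    fun u hu e he => ?_, fun u hu e he => ?_⟩
  · rw [← Real.exp_neg, ← Real.exp_log (hpos u hu), Real.exp_le_exp]
    linarith [neg_le_of_abs_le (hlog u hu)]
  · rw [← Real.exp_log (hpos u hu), Real.exp_le_exp]
    linarith [le_of_abs_le (hlog u hu)]
  · linarith [le_of_abs_le (hbound u hu e he).1]
  · rw [sphHess]
    linarith [le_of_abs_le (hbound u hu u hu.1).1, neg_le_of_abs_le (hbound u hu e he).2]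

end LogBounds

section Solutions

variable {n k : ℕ} {θ : ℝ} {Φ G : V n → ℝ} {u x : V n} {ι : Type*} [Fintype ι]
  {b c : OrthonormalBasis ι ℝ (V n)} {o a : ι}

/-- A strictly convex, positively 1-homogeneous solution of `σ_{k+1} = Φ` on the cap. The index is
shifted by one because the derivative of `σ_{k+1}` involves `σ_k`. -/
structure IsSolution (n k : ℕ) (θ : ℝ) (Φ G : V n → ℝ) : Prop extends IsConeHomogeneous n θ G where
  tauPos : TauPos n θ G
  sigmaElem_eq : ∀ u ∈ sphCap n θ, sigmaElem n (k + 1) G u = Φ u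

lemma IsSolution.secondDeriv_radial (h : IsSolution n k θ Φ G) (hθ : θ ∈ Ioo 0 (π / 2))
    (hu : u ∈ sphCap n θ) (hb : b o = u) : secondDeriv (b o) G u = 0 := by
  rw [hb]
  exact h.hessQ_self hθ hu u

/-- An orthonormal basis diagonalizing the Hessian of `G` at `u`, whose vector at the index `o` is
`u` itself. -/
structure IsPrincipalFrame (G : V n → ℝ) (u : V n) (b : OrthonormalBasis ι ℝ (V n)) (o : ι) :
    Prop where
  radial : b o = u
  diagonal : ∀ i j, i ≠ j → hessQ n G u (b i) (b j) = 0

variable [DecidableEq ι]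

/-- The derivative of `log σ_{k+1}` with respect to the `i`-th principal radius, in a frame whose
radial index `o` is discarded. -/
def principalWeight (k : ℕ) (G : V n → ℝ) (u : V n) (b : OrthonormalBasis ι ℝ (V n)) (o i : ι) :
    ℝ :=
  esymLogDeriv k (Finset.univ.erase o) (fun j => secondDeriv (b j) G u) i

lemma card_univ_erase (b : OrthonormalBasis ι ℝ (V n)) (o : ι) :
    (Finset.univ.erase o).card = n := by
  have hcard : Fintype.card ι = n + 1 := by
    simpa using (Module.finrank_eq_card_basis b.toBasis).symm
  rw [Finset.card_erase_of_mem (Finset.mem_univ o), Finset.card_univ, hcard, Nat.add_sub_cancel]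

lemma esym_univ_eq_esym_erase {y : ι → ℝ} (hy : y o = 0) :
    esym (k + 1) Finset.univ y = esym (k + 1) (Finset.univ.erase o) y := by
  rw [esym_succ_eq_mul_esym_erase_add k (Finset.mem_univ o), hy, zero_mul, zero_add]

namespace IsSolution

lemma secondDeriv_pos (h : IsSolution n k θ Φ G) (hu : u ∈ sphCap n θ) (hb : b o = u) :
    ∀ i ∈ Finset.univ.erase o, 0 < secondDeriv (b i) G u := by
  intro i hi
  refine h.tauPos.2 u hu (b i) (b.orthonormal.ne_zero i) ?_
  rw [← hb, b.orthonormal.2 (Finset.ne_of_mem_erase hi)]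

lemma le_esym (h : IsSolution n k θ Φ G) (hθ : θ ∈ Ioo 0 (π / 2)) (hk : k + 1 ≤ n)
    (hx : x ∈ sphCap n θ) (hc : c o = x) :
    Φ x ≤ esym (k + 1) (Finset.univ.erase o) fun i => secondDeriv (c i) G x := by
  rw [← h.sigmaElem_eq x hx,
    ← esym_univ_eq_esym_erase (y := fun i => secondDeriv (c i) G x)
      (h.secondDeriv_radial hθ hx hc)]
  exact sigmaElem_le_esym (by omega) (h.hessQ_comm hx) (h.tauPos.1 x hx) c

lemma esym_eq (h : IsSolution n k θ Φ G) (hθ : θ ∈ Ioo 0 (π / 2)) (hk : k + 1 ≤ n)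
    (hu : u ∈ sphCap n θ) (hb : IsPrincipalFrame G u b o) :
    esym (k + 1) (Finset.univ.erase o) (fun i => secondDeriv (b i) G u) = Φ u := by
  rw [← h.sigmaElem_eq u hu,
    ← esym_univ_eq_esym_erase (y := fun i => secondDeriv (b i) G u)
      (h.secondDeriv_radial hθ hu hb.radial)]
  exact (sigmaElem_eq_esym (by omega) b hb.diagonal).symm

lemma principalWeight_nonneg (h : IsSolution n k θ Φ G) (hu : u ∈ sphCap n θ) (hb : b o = u)
    (i : ι) : 0 ≤ principalWeight k G u b o i :=
  esymLogDeriv_nonneg (fun j hj => (h.secondDeriv_pos hu hb j hj).le) i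

lemma sum_principalWeight_mul (h : IsSolution n k θ Φ G) (hk : k + 1 ≤ n) (hu : u ∈ sphCap n θ)
    (hb : b o = u) :
    ∑ i ∈ Finset.univ.erase o, principalWeight k G u b o i * secondDeriv (b i) G u = k + 1 :=
  sum_esymLogDeriv_mul_self (by rwa [card_univ_erase b]) (h.secondDeriv_pos hu hb)

lemma log_sub_log_add_le (h : IsSolution n k θ Φ G) (hθ : θ ∈ Ioo 0 (π / 2)) (hk : k + 1 ≤ n)
    (hu : u ∈ sphCap n θ) (hb : IsPrincipalFrame G u b o) (hx : x ∈ sphCap n θ) (hc : c o = x)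
    (hΦx : 0 < Φ x) :
    Real.log (Φ x) - Real.log (Φ u) + (k + 1) ≤
      ∑ i ∈ Finset.univ.erase o, principalWeight k G u b o i * secondDeriv (c i) G x := by
  have hlog := log_esym_sub_log_esym_le (by rwa [card_univ_erase b])
    (h.secondDeriv_pos hu hb.radial) (h.secondDeriv_pos hx hc)
  rw [h.esym_eq hθ hk hu hb] at hlog
  refine le_trans ?_ hlog
  gcongr
  exact h.le_esym hθ hk hx hc

/-- The linearization at `u` of `log σ_{k+1}(D²G) - log Φ`, read in the fixed frame `b`. The extra
term `w_a ∂_{b o}² G` accounts for the rotation of `b` in the plane of `b o` and `b a`. -/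
lemma isMinOn_linearization (h : IsSolution n k θ Φ G) (hθ : θ ∈ Ioo 0 (π / 2)) (hk : k + 1 ≤ n)
    (hΦ : ∀ x ∈ sphCap n θ, 0 < Φ x) (hu : u ∈ sphCap n θ) (hb : IsPrincipalFrame G u b o)
    (ha : a ∈ Finset.univ.erase o) :
    IsMinOn (fun x => ∑ i ∈ Finset.univ.erase o, principalWeight k G u b o i * secondDeriv (b i) G x
        + principalWeight k G u b o a * secondDeriv (b o) G x + -1 * Real.log (Φ x))
      {x | x ∈ sphCap n θ ∧ ∀ i, i ≠ o → i ≠ a → ⟪b i, x⟫ = 0} u := by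
  rintro x ⟨hx, hbx⟩
  obtain ⟨c, hco, hcb⟩ := exists_orthonormalBasis_of_inner_eq_zero b hx.1 hbx
  have htrace : secondDeriv (c a) G x = secondDeriv (b o) G x + secondDeriv (b a) G x := by
    have hsum : ∑ i, secondDeriv (c i) G x = ∑ i, secondDeriv (b i) G x :=
      (sigmaElem_one_eq_sum G x c).symm.trans (sigmaElem_one_eq_sum G x b)
    rw [← Finset.add_sum_erase _ _ (Finset.mem_univ o), ← Finset.add_sum_erase _ _ ha,
      h.secondDeriv_radial hθ hx hco, ← Finset.add_sum_erase _ _ (Finset.mem_univ o),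
      ← Finset.add_sum_erase _ (fun i => secondDeriv (b i) G x) ha] at hsum
    rw [Finset.sum_congr rfl fun i hi => by
      rw [hcb i (Finset.ne_of_mem_erase (Finset.mem_of_mem_erase hi))
        (Finset.ne_of_mem_erase hi)]] at hsum
    linarith
  have hlog := h.log_sub_log_add_le hθ hk hu hb hx hco (hΦ x hx)
  have hu_eq := h.sum_principalWeight_mul hk hu hb.radial
  have hrot : ∑ i ∈ Finset.univ.erase o, principalWeight k G u b o i * secondDeriv (c i) G x =
      ∑ i ∈ Finset.univ.erase o, principalWeight k G u b o i * secondDeriv (b i) G x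
        + principalWeight k G u b o a * secondDeriv (b o) G x := by
    rw [← Finset.add_sum_erase _ _ ha, htrace, ← Finset.add_sum_erase _
      (fun i => principalWeight k G u b o i * secondDeriv (b i) G x) ha,
      Finset.sum_congr rfl fun i hi => by
        rw [hcb i (Finset.ne_of_mem_erase (Finset.mem_of_mem_erase hi))
          (Finset.ne_of_mem_erase hi)]]
    ring
  rw [hrot] at hlog
  change _ + _ * secondDeriv (b o) G u + _ ≤ _
  rw [hu_eq, h.secondDeriv_radial hθ hu hb.radial, mul_zero]
  linarith

end IsSolution

end Solutions

section InteriorMaximum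

variable {n k : ℕ} {θ K B : ℝ} {Φ G : V n → ℝ} {u e v : V n} {ι : Type*}

lemma norm_arc_center_zero (hu : ‖u‖ = 1) (he : ‖e‖ = 1) (heu : ⟪e, u⟫ = 0) (t : ℝ) :
    ‖arc 0 u e t‖ = 1 := by
  have hinner : ⟪Real.cos t • u, Real.sin t • e⟫ = 0 := by
    rw [real_inner_smul_left, real_inner_smul_right, real_inner_comm, heu, mul_zero, mul_zero]
  rw [arc_center_zero, ← pow_eq_one_iff_of_nonneg (norm_nonneg _) two_ne_zero, norm_add_sq_real,
    hinner, norm_smul, norm_smul, hu, he, Real.norm_eq_abs, Real.norm_eq_abs, mul_one, mul_one,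
    sq_abs, sq_abs]
  linarith [Real.sin_sq_add_cos_sq t]

lemma inner_arc_center_zero (hu : ⟪v, u⟫ = 0) (he : ⟪v, e⟫ = 0) (t : ℝ) :
    ⟪v, arc 0 u e t⟫ = 0 := by
  rw [arc_center_zero, inner_add_right, real_inner_smul_right, real_inner_smul_right, hu, he,
    mul_zero, mul_zero, add_zero]

lemma eventually_arc_mem_sphCap (hu : u ∈ sphCap n θ) (hlast : Real.cos θ < u (Fin.last n))
    (he : ‖e‖ = 1) (heu : ⟪e, u⟫ = 0) : ∀ᶠ t in 𝓝 0, arc 0 u e t ∈ sphCap n θ := by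
  have hcont : Continuous fun x : V n => x (Fin.last n) := by fun_prop
  filter_upwards
    [(tendsto_arc 0 u e).eventually (hcont.continuousAt.eventually (lt_mem_nhds hlast))]
    with t ht using ⟨norm_arc_center_zero hu.1 he heu t, ht.le⟩

namespace IsConeHomogeneous

lemma sphHess_secondDeriv_sub_sphHess (hG : IsConeHomogeneous n θ G) (hθ : θ ∈ Ioo 0 (π / 2))
    (hu : u ∈ sphCap n θ) (v w : V n) :
    sphHess v (secondDeriv w G) u - sphHess w (secondDeriv v G) u =
      secondDeriv w G u - secondDeriv v G u := by
  rw [sphHess, sphHess, hG.dirDeriv_self_secondDeriv hθ hu, hG.dirDeriv_self_secondDeriv hθ hu,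
    secondDeriv_comm (hG.contDiffAt_of_mem_sphCap hu) v w]
  ring

lemma sphHess_secondDeriv_self (hG : IsConeHomogeneous n θ G) (hθ : θ ∈ Ioo 0 (π / 2))
    (hu : u ∈ sphCap n θ) (w : V n) :
    sphHess w (secondDeriv u G) u = 2 * secondDeriv w G u := by
  rw [sphHess, hG.dirDeriv_secondDeriv_self hθ hu, sub_zero,
    hG.secondDeriv_secondDeriv_self hθ hu]

lemma contDiffAt_sum_mul_secondDeriv (hG : IsConeHomogeneous n θ G) (hu : u ∈ sphCap n θ)
    (S : Finset ι) (w : ι → ℝ) (b : ι → V n) :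
    ContDiffAt ℝ 2 (fun x => ∑ i ∈ S, w i * secondDeriv (b i) G x) u :=
  ContDiffAt.sum fun i _ => contDiffAt_const.mul (hG.contDiffAt_secondDeriv hu (b i))

lemma sphHess_sum_mul_secondDeriv (hG : IsConeHomogeneous n θ G) (hu : u ∈ sphCap n θ)
    (S : Finset ι) (w : ι → ℝ) (b : ι → V n) (e : V n) :
    sphHess e (fun x => ∑ i ∈ S, w i * secondDeriv (b i) G x) u =
      ∑ i ∈ S, w i * sphHess e (secondDeriv (b i) G) u := by
  rw [sphHess_sum fun i _ => contDiffAt_const.mul (hG.contDiffAt_secondDeriv hu (b i))]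
  exact Finset.sum_congr rfl fun i _ => sphHess_const_mul (hG.contDiffAt_secondDeriv hu (b i)) _ e

end IsConeHomogeneous

variable [Fintype ι] {b : OrthonormalBasis ι ℝ (V n)} {o a : ι}

lemma IsPrincipalFrame.inner_eq_zero (hb : IsPrincipalFrame G u b o) (ha : a ≠ o) :
    ⟪b a, u⟫ = 0 := by
  rw [← hb.radial, b.orthonormal.2 ha]

lemma isMinOn_neg_sigmaElem_one_add {s : Set (V n)} (b : OrthonormalBasis ι ℝ (V n))
    (hmax : IsMaxOn (fun x => sigmaElem n 1 G x + B * x (Fin.last n)) s u) :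
    IsMinOn (fun x => ∑ i, (-1) * secondDeriv (b i) G x +
      -B * (EuclideanSpace.proj (Fin.last n) : V n →L[ℝ] ℝ) x) s u := by
  intro x hx
  have h := hmax hx
  simp only [mem_ofPred_eq, sigmaElem_one_eq_sum G _ b] at h ⊢
  rw [← Finset.mul_sum, ← Finset.mul_sum]
  change _ + -B * u (Fin.last n) ≤ _ + -B * x (Fin.last n)
  change ∑ i, secondDeriv (b i) G x + _ ≤ ∑ i, secondDeriv (b i) G u + _ at h
  linarith

variable [DecidableEq ι]

lemma IsConeHomogeneous.sum_sphHess_add_le_of_isMaxOn (hG : IsConeHomogeneous n θ G)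
    (hθ : θ ∈ Ioo 0 (π / 2)) (hu : u ∈ sphCap n θ) (hlast : Real.cos θ < u (Fin.last n))
    (hb : IsPrincipalFrame G u b o)
    (hmax : IsMaxOn (fun x => sigmaElem n 1 G x + B * x (Fin.last n)) (sphCap n θ) u)
    (ha : a ∈ Finset.univ.erase o) :
    ∑ i ∈ Finset.univ.erase o, sphHess (b a) (secondDeriv (b i) G) u + 2 * secondDeriv (b a) G u ≤
      B * u (Fin.last n) := by
  set L : V n →L[ℝ] ℝ := EuclideanSpace.proj (Fin.last n)
  have hmin := isMinOn_neg_sigmaElem_one_add b hmax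
  have hL : ContDiffAt ℝ 2 (fun x => -B * L x) u := contDiffAt_const.mul L.contDiff.contDiffAt
  have hsum := hG.contDiffAt_sum_mul_secondDeriv hu Finset.univ (fun _ => -1) b
  have hess := sphHess_nonneg_of_isMinOn hmin (hsum.add hL)
    (eventually_arc_mem_sphCap hu hlast (b.orthonormal.1 a)
      (hb.inner_eq_zero (Finset.ne_of_mem_erase ha)))
  rw [sphHess_add hsum hL, hG.sphHess_sum_mul_secondDeriv hu,
    sphHess_const_mul L.contDiff.contDiffAt, sphHess_clm, ← Finset.mul_sum,
    ← Finset.add_sum_erase _ _ (Finset.mem_univ o), hb.radial,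
    hG.sphHess_secondDeriv_self hθ hu] at hess
  change 0 ≤ _ + -B * -u (Fin.last n) at hess
  linarith

namespace IsSolution

lemma neg_sub_le_sum_mul_sphHess (h : IsSolution n k θ Φ G) (hθ : θ ∈ Ioo 0 (π / 2))
    (hk : k + 1 ≤ n) (hΦ : HasLogBounds n θ Φ K) (hu : u ∈ sphCap n θ)
    (hlast : Real.cos θ < u (Fin.last n)) (hb : IsPrincipalFrame G u b o)
    (ha : a ∈ Finset.univ.erase o) :
    -K - 2 * (principalWeight k G u b o a * secondDeriv (b a) G u) ≤
      ∑ i ∈ Finset.univ.erase o,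
        principalWeight k G u b o i * sphHess (b a) (secondDeriv (b i) G) u := by
  have hmin := h.isMinOn_linearization hθ hk (fun x hx => hΦ.pos hx) hu hb ha
  have hsum := h.contDiffAt_sum_mul_secondDeriv hu (Finset.univ.erase o)
    (principalWeight k G u b o) b
  have hrot : ContDiffAt ℝ 2
      (fun x => principalWeight k G u b o a * secondDeriv (b o) G x) u :=
    contDiffAt_const.mul (h.contDiffAt_secondDeriv hu (b o))
  have hlog : ContDiffAt ℝ 2 (fun x => -1 * Real.log (Φ x)) u :=
    contDiffAt_const.mul (hΦ.contDiffAt u hu)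
  have hess := sphHess_nonneg_of_isMinOn hmin ((hsum.add hrot).add hlog) (by
    filter_upwards [eventually_arc_mem_sphCap hu hlast (b.orthonormal.1 a)
      (hb.inner_eq_zero (Finset.ne_of_mem_erase ha))] with t ht
    exact ⟨ht, fun i hio hia =>
      inner_arc_center_zero (hb.inner_eq_zero hio) (b.orthonormal.2 hia) t⟩)
  rw [sphHess_add (hsum.add hrot) hlog, sphHess_add hsum hrot, h.sphHess_sum_mul_secondDeriv hu,
    sphHess_const_mul (h.contDiffAt_secondDeriv hu (b o)), sphHess_const_mul (hΦ.contDiffAt u hu),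
    hb.radial, h.sphHess_secondDeriv_self hθ hu] at hess
  linarith [hΦ.neg_le_sphHess u hu (b a) (b.orthonormal.1 a)]

lemma exists_isPrincipalFrame_of_mem_sphCap (h : IsSolution n k θ Φ G) (hθ : θ ∈ Ioo 0 (π / 2))
    (hu : u ∈ sphCap n θ) :
    ∃ b : OrthonormalBasis (Fin 1 ⊕ Fin n) ℝ (V n), IsPrincipalFrame G u b (Sum.inl 0) := by
  have horth : Orthonormal ℝ fun _ : Fin 1 => u :=
    ⟨fun _ => hu.1, fun i j hij => absurd (Subsingleton.elim i j) hij⟩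
  obtain ⟨b, hbu, hdiag⟩ := exists_orthonormalBasis_sum_diagonal (h.hessQ_comm hu) horth
    (d := n) (by simp [add_comm]) (fun i j hij => absurd (Subsingleton.elim i j) hij)
    fun _ w _ => h.hessQ_self hθ hu w
  exact ⟨b, hbu 0, hdiag⟩

lemma sigmaElem_one_le_of_isMaxOn_of_lt (h : IsSolution n k θ Φ G) (hθ : θ ∈ Ioo 0 (π / 2))
    (hk : k + 1 ≤ n) (hΦ : HasLogBounds n θ Φ K) (hB : 0 ≤ B) (hu : u ∈ sphCap n θ)
    (hlast : Real.cos θ < u (Fin.last n))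
    (hmax : IsMaxOn (fun x => sigmaElem n 1 G x + B * x (Fin.last n)) (sphCap n θ) u) :
    sigmaElem n 1 G u ≤ B + n * (K + (k + 1)) * K / (k + 1) := by
  obtain ⟨b, hb⟩ := h.exists_isPrincipalFrame_of_mem_sphCap hθ hu
  set S := Finset.univ.erase (Sum.inl 0 : Fin 1 ⊕ Fin n)
  have hS : S.card = n := card_univ_erase b _
  have htrace : sigmaElem n 1 G u = ∑ i ∈ S, secondDeriv (b i) G u := by
    rw [sigmaElem_one_eq_sum G u b, ← Finset.add_sum_erase _ _ (Finset.mem_univ (Sum.inl 0))]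
    exact add_eq_right.2 (h.secondDeriv_radial hθ hu hb.radial)
  have hBu : B * u (Fin.last n) ≤ B := mul_le_of_le_one_right hB (apply_last_le_one hu)
  have hweight : (k + 1) / K ≤ ∑ i ∈ S, principalWeight k G u b (Sum.inl 0) i :=
    div_le_sum_esymLogDeriv (by rwa [hS]) (h.secondDeriv_pos hu hb.radial) hΦ.one_le
      ((h.esym_eq hθ hk hu hb).trans_le (hΦ.le u hu))
  have hprod := sum_sub_mul_sum_le_of_commutator (S := S)
    (M := fun a i => sphHess (b a) (secondDeriv (b i) G) u)
    (fun a _ i _ => h.sphHess_secondDeriv_sub_sphHess hθ hu (b a) (b i))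
    (fun a _ => h.principalWeight_nonneg hu hb.radial a)
    (fun a ha => (h.sum_sphHess_add_le_of_isMaxOn hθ hu hlast hb hmax ha).trans hBu)
    (fun a ha => h.neg_sub_le_sum_mul_sphHess hθ hk hΦ hu hlast hb ha)
  rw [h.sum_principalWeight_mul hk hu hb.radial, hS, ← htrace] at hprod
  rcases le_total (sigmaElem n 1 G u) B with hle | hle
  · exact hle.trans (le_add_of_nonneg_right (by have := hΦ.one_le; positivity))
  have hK : 0 < K := one_pos.trans_le hΦ.one_le
  have hscaled : (sigmaElem n 1 G u - B) * ((k + 1) / K) ≤ n * (K + (k + 1)) :=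
    (mul_le_mul_of_nonneg_left hweight (sub_nonneg.2 hle)).trans hprod
  rw [← mul_div_assoc, div_le_iff₀ hK, ← le_div_iff₀ (by positivity)] at hscaled
  linarith

end IsSolution

end InteriorMaximum

section Conormal

variable {n : ℕ} {θ : ℝ} {G : V n → ℝ} {u e y : V n}

/-- The outward unit conormal of the cap `S^n_θ` at the boundary point `u`. -/
def conormal (n : ℕ) (θ : ℝ) (u : V n) : V n :=
  (Real.sin θ)⁻¹ • (Real.cos θ • u - Etop n)

lemma Etop_eq_sub_conormal (hθ : θ ∈ Ioo 0 (π / 2)) (u : V n) :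
    Etop n = Real.cos θ • u - Real.sin θ • conormal n θ u := by
  rw [conormal, smul_inv_smul₀ (sin_pos_of_mem_Ioo hθ).ne', sub_sub_cancel]

lemma inner_conormal_self (hu : u ∈ sphCapBdry n θ) : ⟪conormal n θ u, u⟫ = 0 := by
  rw [conormal, real_inner_smul_left, inner_sub_left, real_inner_smul_left,
    real_inner_comm u (Etop n), inner_Etop, real_inner_self_eq_norm_sq, hu.1, hu.2]
  ring

lemma conormal_last (hθ : θ ∈ Ioo 0 (π / 2)) (hu : u ∈ sphCapBdry n θ) :
    conormal n θ u (Fin.last n) = -Real.sin θ := by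
  rw [conormal, PiLp.smul_apply, PiLp.sub_apply, PiLp.smul_apply, Etop_last, hu.2, smul_eq_mul,
    smul_eq_mul, inv_mul_eq_iff_eq_mul₀ (sin_pos_of_mem_Ioo hθ).ne']
  linarith [Real.sin_sq_add_cos_sq θ]

lemma norm_conormal (hθ : θ ∈ Ioo 0 (π / 2)) (hu : u ∈ sphCapBdry n θ) :
    ‖conormal n θ u‖ = 1 := by
  have hinner : ⟪conormal n θ u, Etop n⟫ = -Real.sin θ := by
    rw [inner_Etop, conormal_last hθ hu]
  rw [Etop_eq_sub_conormal hθ u, inner_sub_right, real_inner_smul_right, real_inner_smul_right,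
    inner_conormal_self hu, real_inner_self_eq_norm_sq, mul_zero, zero_sub, neg_inj,
    mul_eq_left₀ (sin_pos_of_mem_Ioo hθ).ne'] at hinner
  exact (pow_eq_one_iff_of_nonneg (norm_nonneg _) two_ne_zero).1 hinner

lemma sub_smul_Etop_eq (hθ : θ ∈ Ioo 0 (π / 2)) (u : V n) :
    u - Real.cos θ • Etop n = Real.sin θ • arc 0 (conormal n θ u) u θ := by
  conv_lhs => rw [Etop_eq_sub_conormal hθ u]
  rw [arc_center_zero]
  match_scalars
  · linarith [Real.sin_sq_add_cos_sq θ]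
  · ring

lemma smul_Etop_add_mem_sphCapBdry (hy : ‖y‖ = 1) (hlast : y (Fin.last n) = 0) (θ : ℝ) :
    Real.cos θ • Etop n + Real.sin θ • y ∈ sphCapBdry n θ := by
  have hinner : ⟪y, Etop n⟫ = 0 := by rw [inner_Etop, hlast]
  have hnorm := norm_arc_center_zero (norm_Etop n) hy hinner θ
  rw [arc_center_zero] at hnorm
  exact ⟨hnorm, by simp [Etop_last, hlast]⟩

lemma arc_mem_sphCapBdry (hθ : θ ∈ Ioo 0 (π / 2)) (hu : u ∈ sphCapBdry n θ) (he : ‖e‖ = 1)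
    (heu : ⟪e, u⟫ = 0) (hec : ⟪e, conormal n θ u⟫ = 0) (t : ℝ) :
    arc (Real.cos θ • Etop n) u (Real.sin θ • e) t ∈ sphCapBdry n θ := by
  set ν := arc 0 (conormal n θ u) u θ
  have hcu : ⟪u, conormal n θ u⟫ = 0 := by rw [real_inner_comm, inner_conormal_self hu]
  have hν : ‖ν‖ = 1 := norm_arc_center_zero (norm_conormal hθ hu) hu.1 hcu θ
  have hνlast : ν (Fin.last n) = 0 := by
    have hlast := congrArg (fun x : V n => x (Fin.last n)) (sub_smul_Etop_eq hθ u)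
    simpa [Etop_last, hu.2, (sin_pos_of_mem_Ioo hθ).ne'] using hlast
  have helast : e (Fin.last n) = 0 := by
    rw [← inner_Etop, Etop_eq_sub_conormal hθ u, inner_sub_right, real_inner_smul_right,
      real_inner_smul_right, heu, hec, mul_zero, mul_zero, sub_zero]
  have heν : ⟪e, ν⟫ = 0 := inner_arc_center_zero hec heu θ
  have harc : arc (Real.cos θ • Etop n) u (Real.sin θ • e) t =
      Real.cos θ • Etop n + Real.sin θ • arc 0 ν e t := by
    have hsub : u - Real.cos θ • Etop n = Real.sin θ • ν := sub_smul_Etop_eq hθ u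
    rw [arc, hsub, arc_center_zero, ← sub_eq_zero, ← sub_eq_zero.2 hsub]
    module
  rw [harc]
  refine smul_Etop_add_mem_sphCapBdry (norm_arc_center_zero hν he heν t) ?_ θ
  rw [arc_center_zero, PiLp.add_apply, PiLp.smul_apply, PiLp.smul_apply, hνlast, helast,
    smul_zero, smul_zero, add_zero]

lemma eventually_arc_neg_conormal_mem_sphCap (hθ : θ ∈ Ioo 0 (π / 2)) (hu : u ∈ sphCapBdry n θ) :
    ∀ᶠ t in 𝓝[>] 0, arc 0 u (-conormal n θ u) t ∈ sphCap n θ := by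
  filter_upwards [Ioo_mem_nhdsGT hθ.1] with t ht
  refine ⟨norm_arc_center_zero hu.1 (by rw [norm_neg, norm_conormal hθ hu])
    (by rw [inner_neg_left, inner_conormal_self hu, neg_zero]) t, ?_⟩
  have hlast : arc 0 u (-conormal n θ u) t (Fin.last n) = Real.cos (θ - t) := by
    rw [arc_center_zero, PiLp.add_apply, PiLp.smul_apply, PiLp.smul_apply, PiLp.neg_apply,
      conormal_last hθ hu, hu.2, Real.cos_sub, smul_eq_mul, smul_eq_mul]
    ring
  rw [hlast]
  exact Real.cos_le_cos_of_nonneg_of_le_pi (by linarith [ht.2])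
    (by linarith [hθ.2, Real.pi_pos]) (by linarith [ht.1])

end Conormal

namespace IsConeHomogeneous

variable {n : ℕ} {θ : ℝ} {G : V n → ℝ} {u e w : V n}

lemma hessQ_conormal_eq_zero (hG : IsConeHomogeneous n θ G) (hθ : θ ∈ Ioo 0 (π / 2))
    (hcap : IsCapillaryF n θ G) (hu : u ∈ sphCapBdry n θ) (hwu : ⟪w, u⟫ = 0)
    (hwc : ⟪w, conormal n θ u⟫ = 0) : hessQ n G u (conormal n θ u) w = 0 := by
  obtain rfl | hw := eq_or_ne w 0
  · exact map_zero _
  have hu' := sphCapBdry_subset_sphCap n θ hu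
  have hGu := hG.contDiffAt_of_mem_sphCap hu'
  have hstationary : dirDeriv (Real.sin θ • ‖w‖⁻¹ • w) (dirDeriv (Etop n) G) u = 0 :=
    dirDeriv_eq_zero_of_arc (a := Real.cos θ • Etop n)
      ((contDiffAt_dirDeriv (m := 1) hGu (by norm_num) _).differentiableAt one_ne_zero) fun t =>
        hcap _ (arc_mem_sphCapBdry hθ hu (norm_smul_inv_norm (𝕜 := ℝ) hw)
          (by rw [real_inner_smul_left, hwu, mul_zero])
          (by rw [real_inner_smul_left, hwc, mul_zero]) t)
  have hmixed : hessQ n G u w (Etop n) = 0 := by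
    rw [← fderiv_fderiv_apply (hGu.of_le (by norm_num)), map_smul, map_smul] at hstationary
    simpa [hessQ, (sin_pos_of_mem_Ioo hθ).ne', hw] using hstationary
  rw [Etop_eq_sub_conormal hθ u, hessQ, map_sub, map_smul, map_smul] at hmixed
  change _ • hessQ n G u w u - _ • hessQ n G u w _ = 0 at hmixed
  rw [hG.hessQ_comm hu' w u, hG.hessQ_self hθ hu', smul_zero, zero_sub, neg_eq_zero,
    smul_eq_zero_iff_right (sin_pos_of_mem_Ioo hθ).ne'] at hmixed
  rw [hG.hessQ_comm hu', hmixed]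

lemma sin_mul_dirDeriv_conormal_secondDeriv (hG : IsConeHomogeneous n θ G)
    (hθ : θ ∈ Ioo 0 (π / 2)) (hcap : IsCapillaryF n θ G) (hu : u ∈ sphCapBdry n θ)
    (he : ‖e‖ = 1) (heu : ⟪e, u⟫ = 0) (hec : ⟪e, conormal n θ u⟫ = 0) :
    Real.sin θ * dirDeriv (conormal n θ u) (secondDeriv e G) u =
      Real.cos θ * (secondDeriv (conormal n θ u) G u - secondDeriv e G u) := by
  have hu' := sphCapBdry_subset_sphCap n θ hu
  have hGu := hG.contDiffAt_of_mem_sphCap hu'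
  have hsin := (sin_pos_of_mem_Ioo hθ).ne'
  set μ := conormal n θ u
  have hEtop : ∀ L : V n →L[ℝ] ℝ, L (Etop n) = Real.cos θ * L u - Real.sin θ * L μ := fun L => by
    rw [Etop_eq_sub_conormal hθ u, map_sub, map_smul, map_smul, smul_eq_mul, smul_eq_mul]
  have hcurv : secondDeriv (Real.sin θ • e) (dirDeriv (Etop n) G) u =
      dirDeriv (u - Real.cos θ • Etop n) (dirDeriv (Etop n) G) u :=
    secondDeriv_eq_of_arc (contDiffAt_dirDeriv hGu (by norm_num) _) fun t =>
      hcap _ (arc_mem_sphCapBdry hθ hu he heu hec t)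
  have hradial : dirDeriv (u - Real.cos θ • Etop n) (dirDeriv (Etop n) G) u =
      Real.sin θ ^ 2 * -(Real.cos θ * secondDeriv μ G u) := by
    rw [← fderiv_fderiv_apply (hGu.of_le (by norm_num)), sub_smul_Etop_eq hθ u, arc_center_zero,
      hEtop, map_smul, map_add, map_smul, map_smul]
    change Real.cos θ * (_ * (_ * hessQ n G u _ u + _ * hessQ n G u u u)) -
      _ * (_ * (_ * secondDeriv μ G u + _ * hessQ n G u u μ)) = _
    rw [hG.hessQ_comm hu' _ u, hG.hessQ_self hθ hu', hG.hessQ_self hθ hu']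
    ring
  have htransport : secondDeriv (Real.sin θ • e) (dirDeriv (Etop n) G) u = Real.sin θ ^ 2 *
      (-(Real.cos θ * secondDeriv e G u) - Real.sin θ * dirDeriv μ (secondDeriv e G) u) := by
    have hscale : secondDeriv (Real.sin θ • e) (dirDeriv (Etop n) G) u =
        Real.sin θ ^ 2 * secondDeriv e (dirDeriv (Etop n) G) u := by
      simp only [secondDeriv, map_smul, _root_.smul_apply, smul_eq_mul]
      ring
    rw [hscale, (secondDeriv_dirDeriv_comm (hGu.of_le (by norm_num)) e (Etop n)).eq_of_nhds,
      dirDeriv, hEtop]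
    change _ * (_ * dirDeriv u _ u - _ * dirDeriv μ _ u) = _
    rw [hG.dirDeriv_self_secondDeriv hθ hu']
    ring
  rw [htransport, hradial, mul_right_inj' (pow_ne_zero 2 hsin)] at hcurv
  linarith

end IsConeHomogeneous

section BoundaryMaximum

variable {n k : ℕ} {θ K B : ℝ} {Φ G : V n → ℝ} {u : V n} {ι : Type*}

lemma IsConeHomogeneous.differentiableAt_mul_secondDeriv (hG : IsConeHomogeneous n θ G)
    (hu : u ∈ sphCap n θ) (c : ℝ) (w : V n) :
    DifferentiableAt ℝ (fun x => c * secondDeriv w G x) u :=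
  ((hG.contDiffAt_secondDeriv hu w).differentiableAt two_ne_zero).const_mul c

lemma IsConeHomogeneous.dirDeriv_sum_mul_secondDeriv (hG : IsConeHomogeneous n θ G)
    (hu : u ∈ sphCap n θ) (S : Finset ι) (w : ι → ℝ) (b : ι → V n) (e : V n) :
    dirDeriv e (fun x => ∑ i ∈ S, w i * secondDeriv (b i) G x) u =
      ∑ i ∈ S, w i * dirDeriv e (secondDeriv (b i) G) u := by
  rw [dirDeriv_sum fun i _ => hG.differentiableAt_mul_secondDeriv hu _ (b i)]
  exact Finset.sum_congr rfl fun i _ => dirDeriv_const_mul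
    ((hG.contDiffAt_secondDeriv hu (b i)).differentiableAt two_ne_zero) _ e

lemma IsConeHomogeneous.exists_isPrincipalFrame_conormal (hG : IsConeHomogeneous n θ G)
    (hn : 1 ≤ n) (hθ : θ ∈ Ioo 0 (π / 2)) (hcap : IsCapillaryF n θ G)
    (hu : u ∈ sphCapBdry n θ) :
    ∃ b : OrthonormalBasis (Fin 2 ⊕ Fin (n - 1)) ℝ (V n),
      IsPrincipalFrame G u b (Sum.inl 0) ∧ b (Sum.inl 1) = conormal n θ u := by
  have hu' := sphCapBdry_subset_sphCap n θ hu
  have hcu : ⟪u, conormal n θ u⟫ = 0 := by rw [real_inner_comm, inner_conormal_self hu]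
  have horth : Orthonormal ℝ ![u, conormal n θ u] := by
    simp [orthonormal_vecCons_iff, hu.1, norm_conormal hθ hu, hcu]
  have hradial := hG.hessQ_self hθ hu'
  have hradial' : hessQ n G u (conormal n θ u) u = 0 :=
    (hG.hessQ_comm hu' _ u).trans (hradial _)
  obtain ⟨b, hbv, hdiag⟩ := exists_orthonormalBasis_sum_diagonal (hG.hessQ_comm hu') horth
    (d := n - 1) (by simp; omega)
    (by
      intro i j hij
      fin_cases i <;> fin_cases j
      · exact absurd rfl hij
      · exact hradial _
      · exact hradial'
      · exact absurd rfl hij)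
    (by
      intro i w hw
      fin_cases i
      · exact hradial w
      · exact hG.hessQ_conormal_eq_zero hθ hcap hu (by simpa [real_inner_comm] using hw 0)
          (by simpa [real_inner_comm] using hw 1))
  exact ⟨b, ⟨hbv 0, hdiag⟩, hbv 1⟩

variable [Fintype ι] [DecidableEq ι] {b : OrthonormalBasis ι ℝ (V n)} {o m : ι}

lemma IsConeHomogeneous.mul_sin_le_sum_dirDeriv_conormal (hG : IsConeHomogeneous n θ G)
    (hθ : θ ∈ Ioo 0 (π / 2)) (hu : u ∈ sphCapBdry n θ) (hb : IsPrincipalFrame G u b o)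
    (hmax : IsMaxOn (fun x => sigmaElem n 1 G x + B * x (Fin.last n)) (sphCap n θ) u) :
    B * Real.sin θ ≤
      ∑ i ∈ Finset.univ.erase o, dirDeriv (conormal n θ u) (secondDeriv (b i) G) u := by
  have hu' := sphCapBdry_subset_sphCap n θ hu
  set L : V n →L[ℝ] ℝ := EuclideanSpace.proj (Fin.last n)
  have hmin := isMinOn_neg_sigmaElem_one_add b hmax
  have hL : DifferentiableAt ℝ (fun x => -B * L x) u := L.differentiableAt.const_mul _
  have hsum := (hG.contDiffAt_sum_mul_secondDeriv hu' Finset.univ (fun _ => -1) b).differentiableAt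
    two_ne_zero
  have hslope := dirDeriv_nonneg_of_isMinOn hmin (hsum.add hL)
    (eventually_arc_neg_conormal_mem_sphCap hθ hu)
  rw [dirDeriv_neg, dirDeriv_add hsum hL, hG.dirDeriv_sum_mul_secondDeriv hu',
    dirDeriv_const_mul L.differentiableAt, ← Finset.mul_sum,
    ← Finset.add_sum_erase _ _ (Finset.mem_univ o), hb.radial,
    hG.dirDeriv_secondDeriv_self hθ hu', dirDeriv, L.fderiv] at hslope
  change 0 ≤ -(_ + -B * conormal n θ u (Fin.last n)) at hslope
  rw [conormal_last hθ hu] at hslope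
  linarith

namespace IsSolution

lemma sum_mul_dirDeriv_conormal_le (h : IsSolution n k θ Φ G) (hθ : θ ∈ Ioo 0 (π / 2))
    (hk : k + 1 ≤ n) (hΦ : HasLogBounds n θ Φ K) (hu : u ∈ sphCapBdry n θ)
    (hb : IsPrincipalFrame G u b o) (hm : m ∈ Finset.univ.erase o)
    (hbm : b m = conormal n θ u) :
    ∑ i ∈ Finset.univ.erase o,
      principalWeight k G u b o i * dirDeriv (conormal n θ u) (secondDeriv (b i) G) u ≤ K := by
  have hu' := sphCapBdry_subset_sphCap n θ hu
  have hmin := h.isMinOn_linearization hθ hk (fun x hx => hΦ.pos hx) hu' hb hm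
  have hsum := (h.contDiffAt_sum_mul_secondDeriv hu' (Finset.univ.erase o)
    (principalWeight k G u b o) b).differentiableAt two_ne_zero
  have hrot := h.differentiableAt_mul_secondDeriv hu' (principalWeight k G u b o m) (b o)
  have hsum_rot : DifferentiableAt ℝ (fun x =>
      ∑ i ∈ Finset.univ.erase o, principalWeight k G u b o i * secondDeriv (b i) G x
        + principalWeight k G u b o m * secondDeriv (b o) G x) u := hsum.add hrot
  have hlogΦ := (hΦ.contDiffAt u hu').differentiableAt two_ne_zero
  have hlog : DifferentiableAt ℝ (fun x => -1 * Real.log (Φ x)) u := hlogΦ.const_mul _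
  have hslope := dirDeriv_nonneg_of_isMinOn hmin (hsum_rot.add hlog) (by
    filter_upwards [eventually_arc_neg_conormal_mem_sphCap hθ hu] with t ht
    refine ⟨ht, fun i hio him => inner_arc_center_zero (hb.inner_eq_zero hio) ?_ t⟩
    rw [inner_neg_right, ← hbm, b.orthonormal.2 him, neg_zero])
  rw [dirDeriv_neg, dirDeriv_add hsum_rot hlog, dirDeriv_add hsum hrot,
    h.dirDeriv_sum_mul_secondDeriv hu',
    dirDeriv_const_mul ((h.contDiffAt_secondDeriv hu' (b o)).differentiableAt two_ne_zero),
    dirDeriv_const_mul hlogΦ, hb.radial, h.dirDeriv_secondDeriv_self hθ hu'] at hslope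
  linarith [hΦ.dirDeriv_le u hu' _ (norm_conormal hθ hu)]

lemma cot_mul_sum_le_of_isMaxOn (h : IsSolution n k θ Φ G) (hθ : θ ∈ Ioo 0 (π / 2))
    (hk : k + 1 ≤ n) (hcap : IsCapillaryF n θ G) (hΦ : HasLogBounds n θ Φ K)
    (hu : u ∈ sphCapBdry n θ) (hb : IsPrincipalFrame G u b o) (hm : m ∈ Finset.univ.erase o)
    (hbm : b m = conormal n θ u)
    (hmax : IsMaxOn (fun x => sigmaElem n 1 G x + B * x (Fin.last n)) (sphCap n θ) u) :
    Real.cos θ / Real.sin θ * ∑ i ∈ Finset.univ.erase o,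
        (principalWeight k G u b o i - principalWeight k G u b o m) *
          (secondDeriv (b m) G u - secondDeriv (b i) G u) ≤
      K - principalWeight k G u b o m * (B * Real.sin θ) := by
  have hu' := sphCapBdry_subset_sphCap n θ hu
  set S := Finset.univ.erase o
  set w := principalWeight k G u b o
  have hterm : ∀ i ∈ S, Real.cos θ / Real.sin θ *
      ((w i - w m) * (secondDeriv (b m) G u - secondDeriv (b i) G u)) =
        (w i - w m) * dirDeriv (conormal n θ u) (secondDeriv (b i) G) u := by
    intro i hi
    obtain rfl | him := eq_or_ne i m
    · rw [sub_self, zero_mul, zero_mul, mul_zero]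
    have hbi := h.sin_mul_dirDeriv_conormal_secondDeriv hθ hcap hu (b.orthonormal.1 i)
      (hb.inner_eq_zero (Finset.ne_of_mem_erase hi)) (by rw [← hbm, b.orthonormal.2 him])
    rw [hbm, eq_div_of_mul_eq (sin_pos_of_mem_Ioo hθ).ne' ((mul_comm _ _).trans hbi)]
    ring
  calc Real.cos θ / Real.sin θ *
        ∑ i ∈ S, (w i - w m) * (secondDeriv (b m) G u - secondDeriv (b i) G u)
      = ∑ i ∈ S, w i * dirDeriv (conormal n θ u) (secondDeriv (b i) G) u -
          w m * ∑ i ∈ S, dirDeriv (conormal n θ u) (secondDeriv (b i) G) u := by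
        rw [Finset.mul_sum, Finset.sum_congr rfl hterm, Finset.mul_sum, ← Finset.sum_sub_distrib]
        simp only [sub_mul]
    _ ≤ K - w m * (B * Real.sin θ) :=
        sub_le_sub (h.sum_mul_dirDeriv_conormal_le hθ hk hΦ hu hb hm hbm)
          (mul_le_mul_of_nonneg_left (h.mul_sin_le_sum_dirDeriv_conormal hθ hu hb hmax)
            (h.principalWeight_nonneg hu' hb.radial m))

end IsSolution

lemma exists_pos_forall_not_isMaxOn (hθ : θ ∈ Ioo 0 (π / 2)) (hk : k + 1 ≤ n)
    (hΦ : HasLogBounds n θ Φ K) :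
    ∃ B : ℝ, 0 < B ∧ ∀ G, IsSolution n k θ Φ G → IsCapillaryF n θ G → ∀ u ∈ sphCapBdry n θ,
      ¬IsMaxOn (fun x => sigmaElem n 1 G x + B * x (Fin.last n)) (sphCap n θ) u := by
  have hsin := sin_pos_of_mem_Ioo hθ
  have hK : 0 < K := one_pos.trans_le hΦ.one_le
  set S := Finset.univ.erase (Sum.inl 0 : Fin 2 ⊕ Fin (n - 1))
  have hS : k + 1 ≤ S.card := by
    rw [Finset.card_erase_of_mem (Finset.mem_univ _), Finset.card_univ, Fintype.card_sum,
      Fintype.card_fin, Fintype.card_fin]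
    omega
  obtain ⟨δ, hδ, hweight⟩ := exists_le_esymLogDeriv hS hΦ.one_le
    (div_pos (cos_pos_of_mem_Ioo hθ) hsin)
  refine ⟨(K + 1) / (δ * Real.sin θ), by positivity, fun G h hcap u hu hmax => ?_⟩
  have hu' := sphCapBdry_subset_sphCap n θ hu
  obtain ⟨b, hb, hbm⟩ := h.exists_isPrincipalFrame_conormal (by omega) hθ hcap hu
  have hm : Sum.inl 1 ∈ S := by simp [S]
  have hpos := h.secondDeriv_pos hu' hb.radial
  have hesym := h.esym_eq hθ hk hu' hb
  have hbound := h.cot_mul_sum_le_of_isMaxOn hθ hk hcap hΦ hu hb hm hbm hmax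
  set w := principalWeight k G u b (Sum.inl 0)
  have hw : 0 ≤ w (Sum.inl 1) := h.principalWeight_nonneg hu' hb.radial _
  have hslope : (K + 1) / (δ * Real.sin θ) * Real.sin θ = (K + 1) / δ := by field_simp
  rw [hslope] at hbound
  have hw_ge : δ ≤ w (Sum.inl 1) := by
    refine hweight _ hpos ((hΦ.inv_le u hu').trans hesym.ge) (hesym.trans_le (hΦ.le u hu')) _ hm
      (hbound.trans (sub_le_self _ (by positivity)))
  have hsum : 0 ≤ ∑ i ∈ S, (w i - w (Sum.inl 1)) *
      (secondDeriv (b (Sum.inl 1)) G u - secondDeriv (b i) G u) :=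
    Finset.sum_nonneg fun i hi => by
      rw [mul_comm]
      exact sub_mul_esymLogDeriv_sub_nonneg (fun j hj => (hpos j hj).le) hm hi
  have hcot := mul_nonneg (div_nonneg (cos_pos_of_mem_Ioo hθ).le hsin.le) hsum
  have hδw : δ * ((K + 1) / δ) ≤ w (Sum.inl 1) * ((K + 1) / δ) := by gcongr
  rw [mul_div_cancel₀ _ hδ.ne'] at hδw
  linarith

end BoundaryMaximum

section Main

variable {n : ℕ} {θ : ℝ} {m : ℕ∞} {g G : V n → ℝ}

lemma IsConeHomogeneous.continuousOn_sigmaElem_one (hG : IsConeHomogeneous n θ G) :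
    ContinuousOn (sigmaElem n 1 G) (sphCap n θ) := by
  have hsum : sigmaElem n 1 G = fun x =>
      ∑ i, secondDeriv (EuclideanSpace.basisFun (Fin (n + 1)) ℝ i) G x :=
    funext fun x => sigmaElem_one_eq_sum G x _
  rw [hsum]
  exact continuousOn_finsetSum _ fun i _ u hu =>
    (hG.contDiffAt_secondDeriv hu _).continuousAt.continuousWithinAt

lemma IsHomExt.contDiffAt (h : IsHomExt n θ m g G) {x : V n} (hx : x ∈ coneCap n θ) :
    ContDiffAt ℝ m G x :=
  let ⟨_, hU, hsub, hG⟩ := h.1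
  hG.contDiffAt (hU.mem_nhds (hsub hx))

lemma IsHomExt.isConeHomogeneous (h : IsHomExt n θ m g G) (hm : 4 ≤ m) :
    IsConeHomogeneous n θ G :=
  ⟨fun _ hx => (h.contDiffAt hx).of_le (WithTop.coe_le_coe.2 hm), h.2.1⟩

theorem capillary_sigma1_estimate_general (n k : ℕ) (θ : ℝ) (hθ : θ ∈ Ioo 0 (π / 2)) (hk : 1 ≤ k)
    (hkn : k ≤ n) (Φ : V n → ℝ) (hΦpos : ∀ u ∈ sphCap n θ, 0 < Φ u)
    (hΦ : ∀ u ∈ sphCap n θ, ContDiffAt ℝ 2 Φ u) :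
    ∃ C : ℝ, 0 < C ∧
      ∀ G : V n → ℝ, IsConeHomogeneous n θ G → IsCapillaryF n θ G → TauPos n θ G →
        (∀ u ∈ sphCap n θ, sigmaElem n k G u = Φ u) →
        ∀ u ∈ sphCap n θ, sigmaElem n 1 G u ≤ C := by
  obtain ⟨k, rfl⟩ := Nat.exists_eq_add_of_le' hk
  obtain ⟨K, hK⟩ := exists_hasLogBounds hΦ hΦpos
  obtain ⟨B, hB, hbdry⟩ := exists_pos_forall_not_isMaxOn hθ hkn hK
  have hK0 := one_pos.trans_le hK.one_le
  refine ⟨B + n * (K + (k + 1)) * K / (k + 1) + B, by positivity, ?_⟩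
  intro G hG hcap hτ hσ x hx
  have h : IsSolution n k θ Φ G := ⟨hG, hτ, hσ⟩
  obtain ⟨u, hu, hmax⟩ := (isCompact_sphCap n θ).exists_isMaxOn ⟨x, hx⟩
    (hG.continuousOn_sigmaElem_one.add
      (by fun_prop : Continuous fun y : V n => B * y (Fin.last n)).continuousOn)
  have hlast : Real.cos θ < u (Fin.last n) :=
    hu.2.lt_of_ne fun heq => hbdry G h hcap u ⟨hu.1, heq.symm⟩ hmax
  have hinterior := h.sigmaElem_one_le_of_isMaxOn_of_lt hθ hkn hK hB.le hu hlast hmax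
  have hBx : 0 ≤ B * x (Fin.last n) := mul_nonneg hB.le ((cos_pos_of_mem_Ioo hθ).le.trans hx.2)
  calc sigmaElem n 1 G x
      ≤ sigmaElem n 1 G x + B * x (Fin.last n) := le_add_of_nonneg_right hBx
    _ ≤ sigmaElem n 1 G u + B * u (Fin.last n) := hmax hx
    _ ≤ _ := add_le_add hinterior (mul_le_of_le_one_right hB.le (apply_last_le_one hu))

end Main

/-- `σ₁` (trace) estimate for solutions of the capillary `σ_k` problem. -/
theorem capillary_sigma1_estimate (n k : ℕ) (hn : 1 ≤ n) (θ : ℝ)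
    (hθ : θ ∈ Ioo 0 (π / 2)) (hk : 1 ≤ k) (hkn : k ≤ n)
    (φ Φ : V n → ℝ) (hφpos : ∀ ζ ∈ capCap n θ, 0 < φ ζ) (hΦ : IsHomExt n θ ⊤ φ Φ) :
    ∃ C : ℝ, 0 < C ∧
      ∀ s G : V n → ℝ, IsHomExt n θ ⊤ s G → IsCapillaryF n θ G → TauPos n θ G →
        (∀ ζ ∈ capCap n θ, sigmaElem n k G (ζ + Real.cos θ • Etop n) = φ ζ) →
        ∀ ζ ∈ capCap n θ, sigmaElem n 1 G (ζ + Real.cos θ • Etop n) ≤ C := by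
  obtain ⟨C, hC, hle⟩ := capillary_sigma1_estimate_general n k θ hθ hk hkn Φ
    (forall_mem_sphCap_iff.2 fun ζ hζ => (hφpos ζ hζ).trans_eq (hΦ.2.2 ζ hζ).symm)
    fun u hu => (hΦ.contDiffAt (sphCap_subset_coneCap n θ hu)).of_le (WithTop.coe_le_coe.2 le_top)
  exact ⟨C, hC, fun s G hG hcap hτ hσ ζ hζ => hle G (hG.isConeHomogeneous le_top) hcap hτ
    (forall_mem_sphCap_iff.2 fun η hη => (hσ η hη).trans (hΦ.2.2 η hη).symm) _ (add_mem_sphCap hζ)⟩
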